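/- arXiv:2111.12426 — 4 statements merged into one kernel-verified Lean document; each statement's English description precedes it below -/
import Mathlib

section
/- For nonnegative integers n, the dual Cauchy identity holds: the sum over all partitions λ contained in an n×k rectangle of s_λ(x_1,...,x_n)·s_{λ'}(y_1,...,y_k) equals ∏_{i=1}^{n} ∏_{j=1}^{k} (1 + x_i y_j), where s_λ denotes the Schur polynomial and λ' the conjugate partition. -/
open Finset

noncomputable section
open scoped Classical

/-- `T` is a semistandard Young tableau of shape with row lengths `r` and entries in
`Fin N` (representing `{1, …, N}`): rows weakly increase, columns strictly increase. -/
def IsSsyt {m N : ℕ} (r : Fin m → ℕ) (T : ∀ i : Fin m, Fin (r i) → Fin N) : Prop :=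
  (∀ (i : Fin m) (j j' : Fin (r i)), (j : ℕ) ≤ (j' : ℕ) → T i j ≤ T i j') ∧
  (∀ (i i' : Fin m) (j : Fin (r i)) (j' : Fin (r i')),
    i < i' → (j : ℕ) = (j' : ℕ) → T i j < T i' j')

/-- The finite set of semistandard Young tableaux of shape `r` with entries in `Fin N`. -/
def ssytFinset (N : ℕ) {m : ℕ} (r : Fin m → ℕ) :
    Finset (∀ i : Fin m, Fin (r i) → Fin N) :=
  Finset.univ.filter (fun T => IsSsyt r T)

/-- The Schur polynomial `s_r(x_1, …, x_N)` as the generating function of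
semistandard Young tableaux of shape `r`. -/
def schurPoly {R : Type*} [CommRing R] (N : ℕ) {m : ℕ} (r : Fin m → ℕ) (x : Fin N → R) : R :=
  ∑ T ∈ ssytFinset N r, ∏ i : Fin m, ∏ j : Fin (r i), x (T i j)

namespace DualCauchy

/-- Partitions in an `N × K` box. -/
def Box (N K : ℕ) : Finset (Fin N → ℕ) :=
  (Fintype.piFinset (fun _ : Fin N => Finset.range (K + 1))).filter (fun l => Antitone l)

theorem mem_Box {N K : ℕ} {l : Fin N → ℕ} :
    l ∈ Box N K ↔ (∀ i, l i ≤ K) ∧ Antitone l := by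
  simp [Box, Fintype.mem_piFinset, Nat.lt_succ_iff]

/-- horizontal strip -/
def HS {N : ℕ} (l m : Fin N → ℕ) : Prop :=
  (∀ i, m i ≤ l i) ∧ ∀ i j, i < j → l j ≤ m i

/-- vertical strip -/
def VS {N : ℕ} (l m : Fin N → ℕ) : Prop :=
  ∀ i, m i ≤ l i ∧ l i ≤ m i + 1

theorem HS.anti_left {N : ℕ} {l m : Fin N → ℕ} (h : HS l m) : Antitone l := by
  intro i j hij
  rcases hij.eq_or_lt with rfl | hij
  · exact le_rfl
  · exact (h.2 i j hij).trans (h.1 i)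

theorem HS.anti_right {N : ℕ} {l m : Fin N → ℕ} (h : HS l m) : Antitone m := by
  intro i j hij
  rcases hij.eq_or_lt with rfl | hij
  · exact le_rfl
  · exact (h.1 j).trans (h.2 i j hij)

/-- conjugate -/
def conj {N : ℕ} (K : ℕ) (l : Fin N → ℕ) : Fin K → ℕ := fun j : Fin K =>
  (Finset.univ.filter (fun i : Fin N => (j : ℕ) < (l i : ℕ))).card

theorem lt_conj {N K : ℕ} {l : Fin N → ℕ} (hl : Antitone l) (i : Fin N) (j : Fin K) :
    (i : ℕ) < conj K l j ↔ (j : ℕ) < l i := by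
  unfold conj
  constructor
  · intro h
    by_contra hc
    have : (Finset.univ.filter (fun i : Fin N => (j : ℕ) < (l i : ℕ))) ⊆ Finset.Iio i := by
      intro a ha
      simp only [mem_filter, mem_univ, true_and, mem_Iio] at ha ⊢
      by_contra hh
      have := hl (not_lt.mp hh)
      omega
    have := Finset.card_le_card this
    rw [Fin.card_Iio] at this
    omega
  · intro h
    have : Finset.Iic i ⊆ (Finset.univ.filter (fun i : Fin N => (j : ℕ) < (l i : ℕ))) := by
      intro a ha
      simp only [mem_filter, mem_univ, true_and, mem_Iic] at ha ⊢
      exact lt_of_lt_of_le h (hl ha)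
    have := Finset.card_le_card this
    rw [Fin.card_Iic] at this
    omega

theorem conj_le {N K : ℕ} (l : Fin N → ℕ) (j : Fin K) : conj K l j ≤ N := by
  unfold conj
  exact (Finset.card_le_univ _).trans (by simp)

theorem conj_mem {N K : ℕ} (l : Fin N → ℕ) : conj K l ∈ Box K N := by
  rw [mem_Box]
  refine ⟨conj_le l, fun a b hab => ?_⟩
  unfold conj
  apply Finset.card_le_card
  intro i
  simp only [mem_filter, mem_univ, true_and]
  have : (a : ℕ) ≤ b := hab
  omega

theorem conj_conj {N K : ℕ} {l : Fin N → ℕ} (hl : l ∈ Box N K) : conj N (conj K l) = l := by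
  rw [mem_Box] at hl
  funext i
  have hc := (mem_Box.mp (conj_mem (K := K) l)).2
  have h1 := conj_le (K := N) (conj K l) i
  have h2 := hl.1 i
  apply le_antisymm
  · by_contra h
    push Not at h
    have hK : l i < K := by omega
    have := (lt_conj hc ⟨l i, hK⟩ i).1 h
    rw [lt_conj hl.2] at this
    simp at this
  · by_contra h
    push Not at h
    have hK : conj N (conj K l) i < K := by omega
    have := (lt_conj hl.2 i ⟨conj N (conj K l) i, hK⟩).2 h
    rw [← lt_conj hc] at this
    simp at this

theorem sum_conj {N K : ℕ} {l : Fin N → ℕ} (hl : ∀ i, l i ≤ K) :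
    ∑ j, conj K l j = ∑ i, l i := by
  unfold conj
  simp_rw [Finset.card_filter]
  rw [Finset.sum_comm]
  refine Finset.sum_congr rfl fun i _ => ?_
  rw [← Finset.card_filter]
  have := Fin.card_filter_val_lt (n := K) (m := l i)
  simp only [this]
  exact min_eq_right (hl i)

theorem conj_HS {N K : ℕ} {l m : Fin N → ℕ} (hl : l ∈ Box N K) (hm : m ∈ Box N K) :
    HS (conj K l) (conj K m) ↔ VS l m := by
  have hl' := mem_Box.mp hl
  have hm' := mem_Box.mp hm
  constructor
  · rintro ⟨h1, h2⟩ i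
    constructor
    · by_contra h
      push Not at h
      have hK : l i < K := lt_of_lt_of_le h (hm'.1 i)
      have := (lt_conj hm'.2 i ⟨l i, hK⟩).2 h
      have := (lt_conj hl'.2 i ⟨l i, hK⟩).1 (this.trans_le (h1 _))
      simp at this
    · by_contra h
      push Not at h
      have hK : m i + 1 < K := lt_of_lt_of_le h (hl'.1 i)
      have := (lt_conj hl'.2 i ⟨m i + 1, hK⟩).2 h
      have := (lt_conj hm'.2 i ⟨m i, by omega⟩).1 (this.trans_le (h2 _ _ (by simp [Fin.lt_def])))
      simp at this
  · intro h
    constructor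
    · intro j
      unfold conj
      apply Finset.card_le_card
      intro i
      simp only [mem_filter, mem_univ, true_and]
      have := (h i).1
      omega
    · intro j j' hj
      unfold conj
      apply Finset.card_le_card
      intro i
      simp only [mem_filter, mem_univ, true_and]
      have := (h i).2
      have : (j : ℕ) < j' := hj
      omega

/-! ### Schur polynomials -/

variable {R : Type*} [CommRing R]

theorem schur_zero_shape (N : ℕ) {m : ℕ} (x : Fin N → R) :
    schurPoly N (fun _ : Fin m => 0) x = 1 := by
  unfold schurPoly
  have : ssytFinset N (fun _ : Fin m => 0) = Finset.univ := by
    unfold ssytFinset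
    apply Finset.filter_true_of_mem
    intro T _
    exact ⟨fun i j => j.elim0, fun i i' j => j.elim0⟩
  rw [this]
  simp

theorem schur_zero_vars {m : ℕ} (r : Fin m → ℕ) (x : Fin 0 → R) (h : ∃ i, r i ≠ 0) :
    schurPoly 0 r x = 0 := by
  unfold schurPoly
  apply Finset.sum_eq_zero
  intro T _
  obtain ⟨i, hi⟩ := h
  exact (T i ⟨0, Nat.pos_of_ne_zero hi⟩).elim0

theorem row_iff {a N : ℕ} (t : Fin a → Fin (N + 1)) (ht : ∀ j j' : Fin a, (j : ℕ) ≤ j' → t j ≤ t j')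
    (j : Fin a) :
    (j : ℕ) < (Finset.univ.filter (fun j => t j ≠ Fin.last N)).card ↔ t j ≠ Fin.last N := by
  constructor
  · intro h hc
    have : (Finset.univ.filter (fun j => t j ≠ Fin.last N)) ⊆ Finset.Iio j := by
      intro b hb
      simp only [mem_filter, mem_univ, true_and, mem_Iio] at hb ⊢
      by_contra hh
      have := ht j b (not_lt.mp hh)
      rw [hc] at this
      exact hb (Fin.last_le_iff.mp this)
    have := Finset.card_le_card this
    rw [Fin.card_Iio] at this
    omega
  · intro h
    have : Finset.Iic j ⊆ (Finset.univ.filter (fun j => t j ≠ Fin.last N)) := by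
      intro b hb
      simp only [mem_filter, mem_univ, true_and, mem_Iic] at hb ⊢
      intro hc
      have := ht b j hb
      rw [hc] at this
      exact h (Fin.last_le_iff.mp this)
    have := Finset.card_le_card this
    rw [Fin.card_Iic] at this
    omega

/-- shape of the sub-tableau with entries different from the last letter -/
def sub {N m : ℕ} {r : Fin m → ℕ} (T : ∀ i : Fin m, Fin (r i) → Fin (N + 1)) : Fin m → ℕ :=
  fun i => (Finset.univ.filter (fun j => T i j ≠ Fin.last N)).card

theorem sub_HS {N m : ℕ} {r : Fin m → ℕ} (hr : Antitone r)
    (T : ∀ i : Fin m, Fin (r i) → Fin (N + 1)) (hT : IsSsyt r T) : HS r (sub T) := by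
  constructor
  · intro i
    exact (Finset.card_le_univ _).trans (by simp)
  · intro i i' hi
    by_contra h
    push Not at h
    have h1 : sub T i < r i := h.trans_le (hr hi.le)
    have h2 := hT.2 i i' ⟨sub T i, h1⟩ ⟨sub T i, h⟩ hi rfl
    have h3 := row_iff (T i) (hT.1 i) ⟨sub T i, h1⟩
    have h4 : T i ⟨sub T i, h1⟩ = Fin.last N := by
      by_contra hc
      have := h3.2 hc
      exact lt_irrefl _ this
    rw [h4] at h2
    exact absurd (Fin.le_last _) (not_le.mpr h2)

/-- extend a tableau by the last letter -/
def ext {N m : ℕ} {r s : Fin m → ℕ} (T : ∀ i : Fin m, Fin (s i) → Fin N) :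
    ∀ i : Fin m, Fin (r i) → Fin (N + 1) :=
  fun i j => if h : (j : ℕ) < s i then (T i ⟨j, h⟩).castSucc else Fin.last N

theorem ext_ne {N m : ℕ} {r s : Fin m → ℕ} (T : ∀ i : Fin m, Fin (s i) → Fin N)
    (i : Fin m) (j : Fin (r i)) : ext (r := r) T i j ≠ Fin.last N ↔ (j : ℕ) < s i := by
  unfold ext
  split_ifs with h
  · simp [h, Fin.castSucc_ne_last]
  · simp [h]

theorem sub_ext {N m : ℕ} {r s : Fin m → ℕ} (hs : ∀ i, s i ≤ r i)
    (T : ∀ i : Fin m, Fin (s i) → Fin N) : sub (ext (r := r) T) = s := by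
  funext i
  unfold sub
  simp_rw [ext_ne]
  have := Fin.card_filter_val_lt (n := r i) (m := s i)
  simp only [this]
  exact min_eq_right (hs i)

theorem ext_ssyt {N m : ℕ} {r s : Fin m → ℕ} (hs : HS r s)
    (T : ∀ i : Fin m, Fin (s i) → Fin N) (hT : IsSsyt s T) : IsSsyt r (ext (r := r) T) := by
  constructor
  · intro i j j' hj
    unfold ext
    split_ifs with h1 h2 h2
    · exact Fin.castSucc_le_castSucc_iff.mpr (hT.1 i _ _ hj)
    · exact Fin.le_last _
    · omega
    · exact le_rfl
  · intro i i' j j' hi hj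
    have h1 : (j : ℕ) < s i := by
      have := hs.2 i i' hi
      have := j'.2
      omega
    unfold ext
    rw [dif_pos h1]
    split_ifs with h2
    · exact Fin.castSucc_lt_castSucc_iff.mpr (hT.2 i i' _ _ hi hj)
    · exact Fin.castSucc_lt_last _

theorem ext_prod {N m : ℕ} {r s : Fin m → ℕ} (hs : ∀ i, s i ≤ r i)
    (T : ∀ i : Fin m, Fin (s i) → Fin N) (x : Fin (N + 1) → R) (i : Fin m) :
    ∏ j : Fin (r i), x (ext (r := r) T i j) =
      (∏ j : Fin (s i), x (T i j).castSucc) * x (Fin.last N) ^ (r i - s i) := by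
  have e : r i = s i + (r i - s i) := by have := hs i; omega
  rw [← (finCongr e).symm.prod_comp, Fin.prod_univ_add]
  congr 1
  · refine Finset.prod_congr rfl fun j _ => ?_
    congr 1
    unfold ext
    simp
  · rw [← Fin.prod_const]
    refine Finset.prod_congr rfl fun j _ => ?_
    congr 1
    unfold ext
    simp

theorem exists_ext {N m : ℕ} {r : Fin m → ℕ}
    (T : ∀ i : Fin m, Fin (r i) → Fin (N + 1)) (hT : IsSsyt r T) (s : Fin m → ℕ)
    (hs : ∀ i, s i ≤ r i) (h : sub T = s) :
    ∃ T' : ∀ i : Fin m, Fin (s i) → Fin N, IsSsyt s T' ∧ ext T' = T := by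
  have key : ∀ (i : Fin m) (j : Fin (r i)), (j : ℕ) < s i ↔ T i j ≠ Fin.last N := by
    intro i j
    rw [← h]
    exact row_iff (T i) (hT.1 i) j
  refine ⟨fun i j => (T i ⟨j, j.2.trans_le (hs i)⟩).castPred ((key i _).1 j.2), ⟨?_, ?_⟩, ?_⟩
  · intro i j j' hj
    exact Fin.castPred_le_castPred_iff.mpr (hT.1 i _ _ hj)
  · intro i i' j j' hi hj
    exact Fin.castPred_lt_castPred_iff.mpr (hT.2 i i' _ _ hi hj)
  · funext i j
    unfold ext
    split_ifs with h1
    · simp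
    · have := (key i j).not.1 h1
      push Not at this
      exact this.symm

theorem ext_inj {N m : ℕ} {r s : Fin m → ℕ} (hs : ∀ i, s i ≤ r i)
    (T T' : ∀ i : Fin m, Fin (s i) → Fin N) (h : ext (r := r) T = ext T') : T = T' := by
  funext i j
  have := congrFun (congrFun h i) ⟨j, j.2.trans_le (hs i)⟩
  unfold ext at this
  simpa using this

theorem branch {N m K : ℕ} {r : Fin m → ℕ} (hr : r ∈ Box m K) (x : Fin (N + 1) → R) :
    schurPoly (N + 1) r x = ∑ s ∈ (Box m K).filter (fun s => HS r s),
      (∏ i, x (Fin.last N) ^ (r i - s i)) * schurPoly N s (fun i => x i.castSucc) := by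
  have hr' := mem_Box.mp hr
  unfold schurPoly
  rw [← Finset.sum_fiberwise_of_maps_to (g := fun T => sub T)
    (t := (Box m K).filter (fun s => HS r s))]
  · refine Finset.sum_congr rfl fun s hs => ?_
    rw [mem_filter] at hs
    rw [Finset.mul_sum]
    symm
    apply Finset.sum_bij (fun T _ => ext (r := r) T)
    · intro T hT
      simp only [ssytFinset, mem_filter, mem_univ, true_and] at hT ⊢
      exact ⟨ext_ssyt hs.2 T hT, sub_ext hs.2.1 T⟩
    · intro T _ T' _ h
      exact ext_inj hs.2.1 T T' h
    · intro T hT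
      simp only [ssytFinset, mem_filter, mem_univ, true_and] at hT
      obtain ⟨T', h1, h2⟩ := exists_ext T hT.1 s hs.2.1 hT.2
      exact ⟨T', by simpa [ssytFinset] using h1, h2⟩
    · intro T _
      simp_rw [ext_prod hs.2.1]
      rw [Finset.prod_mul_distrib, mul_comm]
  · intro T hT
    simp only [ssytFinset, mem_filter, mem_univ, true_and] at hT
    have h := sub_HS hr'.2 T hT
    rw [mem_filter, mem_Box]
    exact ⟨⟨fun i => (h.1 i).trans (hr'.1 i), h.anti_right⟩, h⟩

theorem schur_vanish {m K : ℕ} (N : ℕ) : ∀ {r : Fin m → ℕ} (_ : r ∈ Box m K) (x : Fin N → R)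
    (_ : schurPoly N r x ≠ 0) (i : Fin m) (_ : N ≤ i), r i = 0 := by
  induction N with
  | zero =>
    intro r hr x h i _
    by_contra hc
    exact h (schur_zero_vars r x ⟨i, hc⟩)
  | succ N ih =>
    intro r hr x h i hi
    rw [branch hr] at h
    obtain ⟨s, hs, h⟩ := Finset.exists_ne_zero_of_sum_ne_zero h
    rw [mem_filter] at hs
    have h1 := ih hs.1 _ (right_ne_zero_of_mul h) ⟨N, by omega⟩ le_rfl
    have h2 := hs.2.2 ⟨N, by omega⟩ i (by simp [Fin.lt_def]; omega)
    omega

theorem prod_pow_sub {m : ℕ} (z : R) {r s : Fin m → ℕ} (h : ∀ i, s i ≤ r i) :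
    ∏ i, z ^ (r i - s i) = z ^ (∑ i, r i - ∑ i, s i) := by
  rw [Finset.prod_pow_eq_pow_sum, Finset.sum_tsub_distrib _ (fun i _ => h i)]

theorem branch_conj {N M K : ℕ} {r : Fin M → ℕ} (hr : r ∈ Box M K) (x : Fin (N + 1) → R) :
    schurPoly (N + 1) (conj K r) x = ∑ s ∈ (Box M K).filter (fun s => VS r s),
      (∏ i, x (Fin.last N) ^ (r i - s i)) * schurPoly N (conj K s) (fun i => x i.castSucc) := by
  rw [branch (conj_mem r)]
  symm
  apply Finset.sum_bij (fun s _ => conj K s)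
  · intro s hs
    rw [mem_filter] at hs ⊢
    exact ⟨conj_mem s, (conj_HS hr hs.1).2 hs.2⟩
  · intro s hs s' hs' h
    rw [mem_filter] at hs hs'
    rw [← conj_conj hs.1, h, conj_conj hs'.1]
  · intro s hs
    rw [mem_filter] at hs
    refine ⟨conj M s, ?_, conj_conj hs.1⟩
    rw [mem_filter]
    refine ⟨conj_mem s, ?_⟩
    rw [← conj_HS hr (conj_mem s), conj_conj hs.1]
    exact hs.2
  · intro s hs
    rw [mem_filter] at hs
    congr 1
    rw [prod_pow_sub _ (fun i => (hs.2 i).1), prod_pow_sub _ ((conj_HS hr hs.1).2 hs.2).1,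
      sum_conj (mem_Box.mp hr).1, sum_conj (mem_Box.mp hs.1).1]

/-! ### Local lemma -/

/-- previous part, with value `K` before the start -/
def prev (K : ℕ) (a : ℕ → ℕ) : ℕ → ℕ
  | 0 => K
  | i + 1 => a i

def Lf (x y : R) (K : ℕ) (a b : ℕ → ℕ) (i : ℕ) : R :=
  ∑ l ∈ Finset.Icc (max (a i) (b i)) (min (b i + 1) (prev K a i)), x ^ (l - a i) * y ^ (l - b i)

def Mf (x y : R) (a b : ℕ → ℕ) (i : ℕ) : R :=
  ∑ l ∈ Finset.Icc (max (a i - 1) (b (i + 1))) (min (a i) (b i)), y ^ (a i - l) * x ^ (b i - l)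

theorem step (x y : R) (K : ℕ) (a b : ℕ → ℕ) (i : ℕ) (h1 : a i ≤ b i + 1)
    (h2 : b i ≤ prev K a i) (h2' : a i ≤ prev K a i) (h3 : b (i + 1) ≤ a i)
    (h3' : b (i + 1) ≤ b i) :
    Lf x y K a b i * (if b (i + 1) < a i then 1 + x * y else 1) =
      Mf x y a b i * (if b i < prev K a i then 1 + x * y else 1) := by
  unfold Lf Mf
  generalize prev K a i = p at *
  generalize b (i + 1) = c at *
  generalize a i = A at *
  generalize b i = B at *
  rcases h1.eq_or_lt with rfl | h1
  · have e1 : Finset.Icc (max (B + 1) B) (min (B + 1) p) = {B + 1} := by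
      ext z; simp only [mem_Icc, mem_singleton]; omega
    have e2 : Finset.Icc (max (B + 1 - 1) c) (min (B + 1) B) = {B} := by
      ext z; simp only [mem_Icc, mem_singleton]; omega
    rw [e1, e2, if_pos (by omega), if_pos (by omega)]
    simp
  · obtain ⟨d, rfl⟩ : ∃ d, B = A + d := ⟨B - A, by omega⟩
    have E1 : ∑ l ∈ Finset.Icc (max A (A + d)) (min (A + d + 1) p),
        x ^ (l - A) * y ^ (l - (A + d)) = x ^ d * (if A + d < p then 1 + x * y else 1) := by
      split_ifs with h
      · have e1 : Finset.Icc (max A (A + d)) (min (A + d + 1) p) = {A + d, A + d + 1} := by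
          ext z; simp only [mem_Icc, mem_singleton, mem_insert]; omega
        rw [e1, Finset.sum_pair (by omega)]
        have : A + d + 1 - A = d + 1 := by omega
        simp [this]
        ring
      · have e1 : Finset.Icc (max A (A + d)) (min (A + d + 1) p) = {A + d} := by
          ext z; simp only [mem_Icc, mem_singleton]; omega
        rw [e1]
        simp
    have E2 : ∑ l ∈ Finset.Icc (max (A - 1) c) (min A (A + d)),
        y ^ (A - l) * x ^ (A + d - l) = x ^ d * (if c < A then 1 + x * y else 1) := by
      split_ifs with h
      · have e1 : Finset.Icc (max (A - 1) c) (min A (A + d)) = {A, A - 1} := by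
          ext z; simp only [mem_Icc, mem_singleton, mem_insert]; omega
        rw [e1, Finset.sum_pair (by omega)]
        have h1 : A - (A - 1) = 1 := by omega
        have h2 : A + d - (A - 1) = d + 1 := by omega
        simp [h1, h2]
        ring
      · have e1 : Finset.Icc (max (A - 1) c) (min A (A + d)) = {A} := by
          ext z; simp only [mem_Icc, mem_singleton]; omega
        rw [e1]
        simp
    rw [E1, E2]
    ring

theorem prod_step (x y : R) (K : ℕ) (a b : ℕ → ℕ) (ha : Antitone a) (hb : Antitone b)
    (haK : a 0 ≤ K) (hbK : b 0 < K) (N : ℕ) (h1 : ∀ i < N, a i ≤ b i + 1)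
    (h2 : ∀ i < N, b (i + 1) ≤ a i) :
    (∏ i ∈ Finset.range N, Lf x y K a b i) * (if b N < prev K a N then 1 + x * y else 1) =
      (1 + x * y) * ∏ i ∈ Finset.range N, Mf x y a b i := by
  induction N with
  | zero => simp [prev, hbK]
  | succ N ih =>
    rw [Finset.prod_range_succ, Finset.prod_range_succ]
    have ih := ih (fun i hi => h1 i (by omega)) (fun i hi => h2 i (by omega))
    have hs := step x y K a b N (h1 N (by omega))
      (by cases N with
        | zero => exact hbK.le
        | succ N => exact h2 N (by omega))
      (by cases N with
        | zero => exact haK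
        | succ N => exact ha (Nat.le_succ N))
      (h2 N (by omega)) (hb (Nat.le_succ N))
    have : prev K a (N + 1) = a N := rfl
    rw [this, mul_assoc, hs]
    calc _ = ((∏ i ∈ Finset.range N, Lf x y K a b i) *
      (if b N < prev K a N then 1 + x * y else 1)) * Mf x y a b N := by ring
      _ = _ := by rw [ih]; ring

theorem prod_eq (x y : R) (K : ℕ) (a b : ℕ → ℕ) (ha : Antitone a) (hb : Antitone b)
    (haK : a 0 ≤ K) (hbK : b 0 < K) (N : ℕ) (haN : a N = 0) (hbN : b (N + 1) = 0) :
    (∏ i ∈ Finset.range (N + 1), Lf x y K a b i) =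
      (1 + x * y) * ∏ i ∈ Finset.range (N + 1), Mf x y a b i := by
  by_cases h1 : ∀ i < N + 1, a i ≤ b i + 1
  · by_cases h2 : ∀ i < N + 1, b (i + 1) ≤ a i
    · have := prod_step x y K a b ha hb haK hbK (N + 1) h1 h2
      have e : prev K a (N + 1) = a N := rfl
      rw [e, haN, hbN] at this
      simpa using this
    · push Not at h2
      obtain ⟨i, hi, h⟩ := h2
      have hi' : i < N := by
        by_contra hc
        have : i = N := by omega
        subst this
        omega
      rw [Finset.prod_eq_zero (i := i + 1) (by simp; omega),
        Finset.prod_eq_zero (i := i) (by simp; omega), mul_zero]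
      · unfold Mf
        rw [Finset.Icc_eq_empty (by omega), Finset.sum_empty]
      · unfold Lf
        have e : prev K a (i + 1) = a i := rfl
        rw [e, Finset.Icc_eq_empty (by omega), Finset.sum_empty]
  · push Not at h1
    obtain ⟨i, hi, h⟩ := h1
    rw [Finset.prod_eq_zero (i := i) (by simp; omega),
      Finset.prod_eq_zero (i := i) (by simp; omega), mul_zero]
    · unfold Mf
      rw [Finset.Icc_eq_empty (by omega), Finset.sum_empty]
    · unfold Lf
      rw [Finset.Icc_eq_empty (by omega), Finset.sum_empty]

/-- extension by zero -/
def ez {N : ℕ} (l : Fin N → ℕ) : ℕ → ℕ := fun i => if h : i < N then l ⟨i, h⟩ else 0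

theorem ez_fin {N : ℕ} (l : Fin N → ℕ) (i : Fin N) : ez l i = l i := by simp [ez]

theorem ez_anti {N : ℕ} {l : Fin N → ℕ} (hl : Antitone l) : Antitone (ez l) := by
  intro i j hij
  unfold ez
  split_ifs with h1 h2
  · exact hl hij
  · omega
  · omega
  · exact le_rfl

theorem local_lemma (x y : R) {N K : ℕ} {a b : Fin (N + 1) → ℕ} (ha : a ∈ Box (N + 1) K)
    (hb : b ∈ Box (N + 1) K) (haN : a (Fin.last N) = 0) (hbK : b 0 < K) :
    ∑ l ∈ (Box (N + 1) K).filter (fun l => HS l a ∧ VS l b),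
      (∏ i, x ^ (l i - a i)) * (∏ i, y ^ (l i - b i)) =
    (1 + x * y) * ∑ l ∈ (Box (N + 1) K).filter (fun l => VS a l ∧ HS b l),
      (∏ i, y ^ (a i - l i)) * (∏ i, x ^ (b i - l i)) := by
  have ha' := mem_Box.mp ha
  have hb' := mem_Box.mp hb
  have hL : (Box (N + 1) K).filter (fun l => HS l a ∧ VS l b) =
      Fintype.piFinset (fun i : Fin (N + 1) => Finset.Icc (max (ez a i) (ez b i))
        (min (ez b i + 1) (prev K (ez a) i))) := by
    ext l
    simp only [mem_filter, mem_Box, Fintype.mem_piFinset, mem_Icc, ez_fin]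
    constructor
    · rintro ⟨⟨h1, h2⟩, h3, h4⟩ i
      have q1 := h3.1 i
      have q2 := h4 i
      have q3 : l i ≤ prev K (ez a) i := by
        obtain ⟨i, hi⟩ := i
        cases i with
        | zero => exact h1 _
        | succ i =>
          show _ ≤ ez a i
          have := h3.2 ⟨i, by omega⟩ ⟨i + 1, hi⟩ (by simp [Fin.lt_def])
          rwa [← ez_fin a] at this
      omega
    · intro h
      have hH : HS l a := by
        constructor
        · intro i
          have := h i
          omega
        · intro i j hij
          have h1 := (h j).2
          obtain ⟨j, hj⟩ := j
          cases j with
          | zero => simp [Fin.lt_def] at hij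
          | succ j =>
            have h2 : l ⟨j + 1, hj⟩ ≤ ez a j := h1.trans (min_le_right _ _)
            have h3 := ez_anti ha'.2 (show (i : ℕ) ≤ j by simp [Fin.lt_def] at hij; omega)
            rw [ez_fin] at h3
            omega
      refine ⟨⟨?_, hH.anti_left⟩, hH, ?_⟩
      · intro i
        have h0 := (h 0).2
        have h0' : l 0 ≤ K := h0.trans (min_le_right _ _)
        exact (hH.anti_left (Fin.zero_le i)).trans h0'
      · intro i
        have := h i
        omega
  have hM : (Box (N + 1) K).filter (fun l => VS a l ∧ HS b l) =
      Fintype.piFinset (fun i : Fin (N + 1) => Finset.Icc (max (ez a i - 1) (ez b (i + 1)))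
        (min (ez a i) (ez b i))) := by
    ext l
    simp only [mem_filter, mem_Box, Fintype.mem_piFinset, mem_Icc, ez_fin]
    constructor
    · rintro ⟨⟨h1, h2⟩, h3, h4⟩ i
      have q1 := h3 i
      have q2 := h4.1 i
      have q3 : ez b (i + 1) ≤ l i := by
        by_cases hi : (i : ℕ) + 1 < N + 1
        · have := h4.2 i ⟨i + 1, hi⟩ (by simp [Fin.lt_def])
          rwa [← ez_fin b] at this
        · simp only [ez, dif_neg hi]; omega
      omega
    · intro h
      have hH : HS b l := by
        constructor
        · intro i
          have := h i
          omega
        · intro i j hij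
          have h1 := (h i).1
          have h3 := ez_anti hb'.2 (show (i : ℕ) + 1 ≤ j from hij)
          rw [ez_fin] at h3
          omega
      refine ⟨⟨?_, hH.anti_right⟩, ?_, hH⟩
      · intro i
        exact (hH.1 i).trans (hb'.1 i)
      · intro i
        have := h i
        omega
  rw [hL, hM]
  simp_rw [← Finset.prod_mul_distrib]
  have e1 := Finset.prod_univ_sum (fun i : Fin (N + 1) => Finset.Icc (max (ez a i) (ez b i))
        (min (ez b i + 1) (prev K (ez a) i))) (fun i l => x ^ (l - a i) * y ^ (l - b i))
  have e2 := Finset.prod_univ_sum (fun i : Fin (N + 1) => Finset.Icc (max (ez a i - 1) (ez b (i + 1)))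
        (min (ez a i) (ez b i))) (fun i l => y ^ (a i - l) * x ^ (b i - l))
  rw [← e1, ← e2]
  have key := prod_eq x y K (ez a) (ez b) (ez_anti ha'.2) (ez_anti hb'.2)
    (by simpa [ez] using ha'.1 0) (by simpa [ez] using hbK) N
    (by have := ez_fin a (Fin.last N); rw [haN] at this; simpa using this) (by simp [ez])
  rw [← Fin.prod_univ_eq_prod_range, ← Fin.prod_univ_eq_prod_range] at key
  simpa only [Lf, Mf, ez_fin] using key

/-! ### Pieri and the main induction -/

theorem conj_zero {N : ℕ} (K : ℕ) : conj K (fun _ : Fin N => 0) = fun _ => 0 := by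
  funext j
  simp [conj]

theorem schur_conj_zero_vars {N K : ℕ} {l : Fin N → ℕ} (hl : l ∈ Box N K) (y : Fin 0 → R) :
    schurPoly 0 (conj K l) y = if l = (fun _ => 0) then 1 else 0 := by
  split_ifs with h
  · rw [h, conj_zero, schur_zero_shape]
  · apply schur_zero_vars
    by_contra hc
    push Not at hc
    apply h
    rw [← conj_conj hl, (funext hc : conj K l = fun _ => 0), conj_zero]

theorem pieri {N K : ℕ} (x : R) (k : ℕ) (hk : k ≤ K) (y : Fin k → R) :
    ∀ {a : Fin (N + 1) → ℕ} (_ : a ∈ Box (N + 1) K) (_ : a (Fin.last N) = 0),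
    ∑ l ∈ (Box (N + 1) K).filter (fun l => HS l a),
      (∏ i, x ^ (l i - a i)) * schurPoly k (conj K l) y =
      schurPoly k (conj K a) y * ∏ j, (1 + x * y j) := by
  induction k with
  | zero =>
    intro a ha haN
    simp only [Finset.univ_eq_empty, Finset.prod_empty, mul_one]
    have : ∀ l ∈ (Box (N + 1) K).filter (fun l => HS l a),
        (∏ i, x ^ (l i - a i)) * schurPoly 0 (conj K l) y =
          if l = (fun _ => 0) then schurPoly 0 (conj K a) y else 0 := by
      intro l hl
      rw [mem_filter] at hl
      rw [schur_conj_zero_vars hl.1]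
      split_ifs with h
      · have : a = fun _ => 0 := by
          funext i
          have := hl.2.1 i
          rw [h] at this
          simpa using this
        rw [this, h, conj_zero, schur_zero_shape]
        simp
      · simp
    rw [Finset.sum_congr rfl this, Finset.sum_ite_eq']
    split_ifs with h
    · rfl
    · rw [schur_conj_zero_vars ha, if_neg]
      rintro rfl
      apply h
      rw [mem_filter]
      exact ⟨ha, fun i => le_rfl, fun i j _ => le_rfl⟩
  | succ k ih =>
    intro a ha haN
    have ih := @ih (by omega) (fun i => y i.castSucc)
    set z := y (Fin.last k) with hz
    set S : (Fin (N + 1) → ℕ) → R := fun l => schurPoly k (conj K l) (fun i => y i.castSucc) with hS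
    set B := Box (N + 1) K with hB
    calc ∑ l ∈ B.filter (fun l => HS l a),
          (∏ i, x ^ (l i - a i)) * schurPoly (k + 1) (conj K l) y
        = ∑ l ∈ B, ∑ b ∈ B, if HS l a ∧ VS l b then
            S b * ((∏ i, x ^ (l i - a i)) * (∏ i, z ^ (l i - b i))) else 0 := by
          rw [Finset.sum_filter]
          refine Finset.sum_congr rfl fun l hl => ?_
          split_ifs with h
          · rw [branch_conj hl, Finset.mul_sum, Finset.sum_filter]
            refine Finset.sum_congr rfl fun b _ => ?_
            simp only [h, true_and]
            refine if_congr Iff.rfl ?_ rfl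
            simp only [hS]; ring
          · simp [h]
      _ = ∑ b ∈ B, S b * ∑ l ∈ B.filter (fun l => HS l a ∧ VS l b),
            (∏ i, x ^ (l i - a i)) * (∏ i, z ^ (l i - b i)) := by
          rw [Finset.sum_comm]
          refine Finset.sum_congr rfl fun b _ => ?_
          rw [← Finset.sum_filter, Finset.mul_sum]
      _ = ∑ b ∈ B, S b * ((1 + x * z) * ∑ l ∈ B.filter (fun l => VS a l ∧ HS b l),
            (∏ i, z ^ (a i - l i)) * (∏ i, x ^ (b i - l i))) := by
          refine Finset.sum_congr rfl fun b hb => ?_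
          by_cases h0 : S b = 0
          · simp [h0]
          · rw [local_lemma x z ha hb haN]
            have h1 := schur_vanish k (conj_mem b) _ h0 ⟨k, by omega⟩ le_rfl
            have h2 := (lt_conj (mem_Box.mp hb).2 0 (⟨k, by omega⟩ : Fin K)).not.1 (by omega)
            simp only [] at h2
            omega
      _ = ∑ b ∈ B, ∑ l ∈ B, if VS a l ∧ HS b l then (1 + x * z) * ((∏ i, z ^ (a i - l i)) *
            ((∏ i, x ^ (b i - l i)) * S b)) else 0 := by
          refine Finset.sum_congr rfl fun b hb => ?_
          rw [← Finset.sum_filter, Finset.mul_sum, Finset.mul_sum]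
          refine Finset.sum_congr rfl fun l _ => ?_
          ring
      _ = ∑ l ∈ B.filter (fun l => VS a l), (1 + x * z) * ((∏ i, z ^ (a i - l i)) *
            ∑ b ∈ B.filter (fun b => HS b l), (∏ i, x ^ (b i - l i)) * S b) := by
          rw [Finset.sum_comm, Finset.sum_filter]
          refine Finset.sum_congr rfl fun l hl => ?_
          split_ifs with h
          · simp only [h, true_and]
            rw [← Finset.sum_filter, Finset.mul_sum, Finset.mul_sum]
          · simp [h]
      _ = ∑ l ∈ B.filter (fun l => VS a l), ((∏ i, z ^ (a i - l i)) * S l) *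
            ((∏ j : Fin k, (1 + x * y j.castSucc)) * (1 + x * z)) := by
          refine Finset.sum_congr rfl fun l hl => ?_
          rw [mem_filter] at hl
          rw [ih hl.1 (by have := (hl.2 (Fin.last N)).1; omega)]
          ring
      _ = _ := by
          rw [← Finset.sum_mul, Fin.prod_univ_castSucc, branch_conj ha]

theorem main_ind {N K : ℕ} (y : Fin K → R) (n : ℕ) (hn : n ≤ N) (x : Fin n → R) :
    ∑ l ∈ Box N K, schurPoly n l x * schurPoly K (conj K l) y =
      ∏ i, ∏ j, (1 + x i * y j) := by
  induction n with
  | zero =>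
    have : ∀ l ∈ Box N K, schurPoly 0 l x * schurPoly K (conj K l) y =
        if l = (fun _ => 0) then 1 else 0 := by
      intro l hl
      split_ifs with h
      · rw [h, conj_zero, schur_zero_shape, schur_zero_shape, one_mul]
      · rw [schur_zero_vars, zero_mul]
        by_contra hc
        push Not at hc
        exact h (funext hc)
    rw [Finset.sum_congr rfl this, Finset.sum_ite_eq', if_pos]
    · simp
    · rw [mem_Box]
      exact ⟨fun _ => Nat.zero_le _, fun _ _ _ => le_rfl⟩
  | succ n ih =>
    obtain ⟨M, rfl⟩ : ∃ M, N = M + 1 := ⟨N - 1, by omega⟩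
    have ih := ih (by omega) (fun i => x i.castSucc)
    set z := x (Fin.last n) with hz
    calc ∑ l ∈ Box (M + 1) K, schurPoly (n + 1) l x * schurPoly K (conj K l) y
        = ∑ l ∈ Box (M + 1) K, ∑ a ∈ Box (M + 1) K, if HS l a then
            schurPoly n a (fun i => x i.castSucc) *
              ((∏ i, z ^ (l i - a i)) * schurPoly K (conj K l) y) else 0 := by
          refine Finset.sum_congr rfl fun l hl => ?_
          rw [branch hl, ← Finset.sum_filter, Finset.sum_mul]
          refine Finset.sum_congr rfl fun a _ => ?_
          ring
      _ = ∑ a ∈ Box (M + 1) K, schurPoly n a (fun i => x i.castSucc) *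
            ∑ l ∈ (Box (M + 1) K).filter (fun l => HS l a),
              (∏ i, z ^ (l i - a i)) * schurPoly K (conj K l) y := by
          rw [Finset.sum_comm]
          refine Finset.sum_congr rfl fun a _ => ?_
          rw [← Finset.sum_filter, Finset.mul_sum]
      _ = ∑ a ∈ Box (M + 1) K, schurPoly n a (fun i => x i.castSucc) *
            schurPoly K (conj K a) y * ∏ j, (1 + z * y j) := by
          refine Finset.sum_congr rfl fun a ha => ?_
          by_cases h0 : schurPoly n a (fun i => x i.castSucc) = 0
          · simp [h0]
          · rw [pieri z K le_rfl y ha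
              (schur_vanish n ha _ h0 (Fin.last M) (by simp; omega)), mul_assoc]
      _ = _ := by
          rw [← Finset.sum_mul, ih, Fin.prod_univ_castSucc]

end DualCauchy

/-- Dual Cauchy identity: summing over partitions `λ` inside an `n × k` rectangle,
`Σ_λ s_λ(x) s_{λ'}(y) = ∏_{i,j} (1 + x_i y_j)`, where `λ'` is the conjugate. -/
theorem stmt6 {R : Type*} [CommRing R] (n k : ℕ) (x : Fin n → R) (y : Fin k → R) :
    ∑ l ∈ (Finset.univ.filter
        (fun l : Fin n → Fin (k + 1) => ∀ i j : Fin n, i ≤ j → l j ≤ l i)),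
      schurPoly n (fun i => (l i : ℕ)) x
        * schurPoly k (fun j : Fin k =>
            (Finset.univ.filter (fun i : Fin n => (j : ℕ) < (l i : ℕ))).card) y
      = ∏ i : Fin n, ∏ j : Fin k, (1 + x i * y j) := by
  rw [← DualCauchy.main_ind (N := n) y n le_rfl x]
  apply Finset.sum_bij (fun l _ => fun i => (l i : ℕ))
  · intro l hl
    rw [mem_filter] at hl
    rw [DualCauchy.mem_Box]
    exact ⟨fun i => Nat.lt_succ_iff.mp (l i).2, fun i j hij => hl.2 i j hij⟩
  · intro l _ l' _ h
    funext i
    exact Fin.ext (congrFun h i)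
  · intro l hl
    rw [DualCauchy.mem_Box] at hl
    refine ⟨fun i => ⟨l i, Nat.lt_succ_iff.mpr (hl.1 i)⟩, ?_, rfl⟩
    rw [mem_filter]
    exact ⟨mem_univ _, fun i j hij => hl.2 hij⟩
  · intro l _
    rfl

end
end

section
/- For a partition λ contained in an n×k rectangle with complement λ̄ (λ̄_i = k - λ_{n+1-i}), the following Schur polynomial identity holds: Σ_{λ ⊆ k^n} s_λ(x_1,...,x_n) · s_{λ̄'}(y_1,...,y_k) = ∏_{i=1}^{n} ∏_{j=1}^{k} (x_i + y_j), where λ̄' is the conjugate of the complement of λ in the n×k rectangle. -/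
open Finset

noncomputable section
open scoped Classical

def gtSet {k : ℕ} (r : Fin (k+1) → ℕ) : Finset (Fin k → ℕ) :=
  Fintype.piFinset fun i => Icc (r i.succ) (r i.castSucc)

def gtSchur {R : Type*} [CommRing R] : (k : ℕ) → (Fin k → ℕ) → (Fin k → R) → R
  | 0, _, _ => 1
  | k+1, r, y => ∑ κ ∈ gtSet r, gtSchur k κ (fun i => y i.castSucc) *
      (y (Fin.last k) ^ (r (Fin.last k)) * ∏ i : Fin k, y (Fin.last k) ^ (r i.castSucc - κ i))

/-- vertical strips -/
def vsSet {k : ℕ} (r : Fin k → ℕ) : Finset (Fin k → ℕ) :=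
  (Fintype.piFinset fun i => Icc (r i) (r i + 1)).filter Antitone

lemma prod_shift {R : Type*} [CommRing R] (k : ℕ) (u c : R) (α β : Fin (k+1) → ℕ)
    (hα : α (Fin.last k) = 0) (hβ : β 0 = 0)
    (h1 : ∀ i, α i + β i ≤ 1) (h2 : ∀ i : Fin k, α i.castSucc + β i.succ ≤ 1) :
    ∏ i, (u ^ β i * c ^ (1 - α i - β i)) =
      c * ∏ i : Fin k, (u ^ β i.succ * c ^ (1 - α i.castSucc - β i.succ)) := by
  rw [prod_mul_distrib, prod_mul_distrib, prod_pow_eq_pow_sum, prod_pow_eq_pow_sum,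
    prod_pow_eq_pow_sum, prod_pow_eq_pow_sum, Fin.sum_univ_succ β, hβ, zero_add]
  have e1 : ∑ i, (1 - α i - β i) + ∑ i, α i + ∑ i, β i = k + 1 := by
    rw [← sum_add_distrib, ← sum_add_distrib, sum_congr rfl (g := fun _ => 1)]
    · simp
    · intro i _; have := h1 i; omega
  have e2 : ∑ i : Fin k, (1 - α i.castSucc - β i.succ) + ∑ i : Fin k, α i.castSucc
      + ∑ i : Fin k, β i.succ = k := by
    rw [← sum_add_distrib, ← sum_add_distrib, sum_congr rfl (g := fun _ => 1)]
    · simp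
    · intro i _; have := h2 i; omega
  rw [Fin.sum_univ_succ β, hβ, Fin.sum_univ_castSucc α, hα] at e1
  have : ∑ i, (1 - α i - β i) = ∑ i : Fin k, (1 - α i.castSucc - β i.succ) + 1 := by omega
  rw [this, pow_succ]; ring

/-- left local factor -/
lemma left_factor {R : Type*} [CommRing R] (u y : R) (a b p : ℕ) (hba : b ≤ a)
    (h1 : b ≤ p) (h2 : p ≤ a + 1) :
    ∑ q ∈ (Icc b a).filter (fun q => q ≤ p ∧ p ≤ q + 1), (y ^ (a - q) * u ^ (q + 1 - p))
     = y ^ (a - p) * (u ^ (if p = b then 1 else 0) *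
        (u + y) ^ (1 - (if p = a + 1 then 1 else 0) - (if p = b then 1 else 0))) := by
  by_cases ha : p = a + 1
  · have : (Icc b a).filter (fun q => q ≤ p ∧ p ≤ q + 1) = {a} := by
      ext q; simp; omega
    rw [this, sum_singleton]
    have hb : p ≠ b := by omega
    simp [ha, show a + 1 ≠ b by omega]
  · by_cases hb : p = b
    · have : (Icc b a).filter (fun q => q ≤ p ∧ p ≤ q + 1) = {p} := by
        ext q; simp; omega
      rw [this, sum_singleton]
      simp [hb]
    · have : (Icc b a).filter (fun q => q ≤ p ∧ p ≤ q + 1) = {p - 1, p} := by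
        ext q; simp; omega
      rw [this, sum_pair (by omega)]
      obtain ⟨p, rfl⟩ : ∃ m, p = m + 1 := ⟨p - 1, by omega⟩
      obtain ⟨d, rfl⟩ : ∃ d, a = p + 1 + d := ⟨a - (p + 1), by omega⟩
      rw [if_neg ha, if_neg hb]
      simp [show p + 1 + d - p = d + 1 by omega]
      ring

/-- right local factor -/
lemma right_factor {R : Type*} [CommRing R] (u y : R) (v lo hi : ℕ) (hl : lo ≤ v + 1)
    (hh : v ≤ hi) (h : lo ≤ hi) :
    ∑ q ∈ (Icc v (v+1)).filter (fun q => lo ≤ q ∧ q ≤ hi), (u ^ (v + 1 - q) * y ^ (q - lo))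
     = y ^ (v - lo) * (u ^ (if hi = v then 1 else 0) *
        (u + y) ^ (1 - (if lo = v + 1 then 1 else 0) - (if hi = v then 1 else 0))) := by
  by_cases ha : lo = v + 1
  · have : (Icc v (v+1)).filter (fun q => lo ≤ q ∧ q ≤ hi) = {v + 1} := by
      ext q; simp; omega
    rw [this, sum_singleton]
    simp [ha, show hi ≠ v by omega]
  · by_cases hb : hi = v
    · have : (Icc v (v+1)).filter (fun q => lo ≤ q ∧ q ≤ hi) = {v} := by
        ext q; simp; omega
      rw [this, sum_singleton]
      simp [hb, mul_comm]
    · have : (Icc v (v+1)).filter (fun q => lo ≤ q ∧ q ≤ hi) = {v, v + 1} := by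
        ext q; simp; omega
      rw [this, sum_pair (by omega)]
      obtain ⟨d, rfl⟩ : ∃ d, v = lo + d := ⟨v - lo, by omega⟩
      simp [ha, hb, show lo + d + 1 - lo = d + 1 by omega]
      ring

lemma local_id {R : Type*} [CommRing R] (k : ℕ) (u y : R) (ν : Fin (k+1) → ℕ) (ρ : Fin k → ℕ)
    (hν : Antitone ν) (hρ : Antitone ρ) (hle : ∀ i, ρ i ≤ ν i.castSucc + 1) :
    (u + y) * (y ^ (ν (Fin.last k)) *
     ∏ i : Fin k, ∑ q ∈ (Icc (ν i.succ) (ν i.castSucc)).filter (fun q => q ≤ ρ i ∧ ρ i ≤ q + 1),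
      (y ^ (ν i.castSucc - q) * u ^ (q + 1 - ρ i)))
    = ∏ i : Fin (k+1), ∑ q ∈ (Icc (ν i) (ν i + 1)).filter
        (fun q => (Fin.snoc ρ 0 : Fin (k+1) → ℕ) i ≤ q ∧ q ≤ (Fin.cons (ν 0 + 1) ρ : Fin (k+1) → ℕ) i),
        (u ^ (ν i + 1 - q) * y ^ (q - (Fin.snoc ρ 0 : Fin (k+1) → ℕ) i)) := by
  by_cases hb : ∀ i : Fin k, ν i.succ ≤ ρ i
  · have hmono : ∀ i : Fin k, ν i.succ ≤ ν i.castSucc := fun i => hν (Fin.castSucc_lt_succ).le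
    set lo : Fin (k+1) → ℕ := Fin.snoc ρ 0 with hlo
    set hi : Fin (k+1) → ℕ := Fin.cons (ν 0 + 1) ρ with hhi
    have lo1 : ∀ i : Fin k, lo i.castSucc = ρ i := fun i => by simp [hlo]
    have lo2 : lo (Fin.last k) = 0 := by simp [hlo]
    have hi1 : ∀ i : Fin k, hi i.succ = ρ i := fun i => by simp [hhi]
    have hi2 : hi 0 = ν 0 + 1 := by simp [hhi]
    have c1 : ∀ i, lo i ≤ ν i + 1 := by
      intro i
      induction i using Fin.lastCases with
      | last => rw [lo2]; omega
      | cast i => rw [lo1]; exact hle i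
    have c2 : ∀ i, ν i ≤ hi i := by
      intro i
      induction i using Fin.cases with
      | zero => rw [hi2]; omega
      | succ i => rw [hi1]; exact hb i
    have c3 : ∀ i, lo i ≤ hi i := by
      intro i
      induction i using Fin.cases with
      | zero => rw [hi2]; exact c1 0
      | succ i =>
        rw [hi1]
        by_cases hl : i.succ = Fin.last k
        · rw [hl, lo2]; omega
        · obtain ⟨j, hj⟩ := Fin.exists_castSucc_eq.2 hl
          rw [← hj, lo1]
          apply hρ
          have := congrArg Fin.val hj
          simp at this
          rw [Fin.le_def]; omega
    rw [prod_congr rfl (fun i _ => left_factor u y _ _ _ (hmono i) (hb i) (hle i)),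
      prod_congr rfl (fun i _ => right_factor u y _ _ _ (c1 i) (c2 i) (c3 i)),
      prod_mul_distrib (s := (univ : Finset (Fin k))),
      prod_mul_distrib (s := (univ : Finset (Fin (k+1))))]
    rw [prod_shift k u (u+y) (fun i => if lo i = ν i + 1 then 1 else 0)
      (fun i => if hi i = ν i then 1 else 0)]
    · rw [Fin.prod_univ_castSucc]
      simp only [lo1, lo2, hi1]
      simp only [Nat.sub_zero]
      ring
    · simp [lo2]
    · simp [hi2]
    · intro i
      have := c3 i
      split_ifs <;> omega
    · intro i
      have := hmono i
      simp only [lo1, hi1]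
      split_ifs <;> omega
  · push Not at hb
    obtain ⟨i, hi⟩ := hb
    have z1 : (Icc (ν i.succ) (ν i.castSucc)).filter (fun q => q ≤ ρ i ∧ ρ i ≤ q + 1) = ∅ := by
      ext q; simp; omega
    rw [prod_eq_zero (mem_univ i) (by rw [z1, sum_empty]), mul_zero, mul_zero, eq_comm]
    apply prod_eq_zero (mem_univ i.succ)
    rw [filter_eq_empty_iff.2, sum_empty]
    intro q hq
    simp at hq ⊢
    omega

lemma mem_gtSet {k : ℕ} {r : Fin (k+1) → ℕ} {κ : Fin k → ℕ} :
    κ ∈ gtSet r ↔ ∀ i, r i.succ ≤ κ i ∧ κ i ≤ r i.castSucc := by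
  simp [gtSet, Fintype.mem_piFinset]

lemma mem_vsSet {k : ℕ} {r : Fin k → ℕ} {κ : Fin k → ℕ} :
    κ ∈ vsSet r ↔ (∀ i, r i ≤ κ i ∧ κ i ≤ r i + 1) ∧ Antitone κ := by
  simp [vsSet, Fintype.mem_piFinset]

lemma gt_antitone {k : ℕ} {r : Fin (k+1) → ℕ} {κ : Fin k → ℕ} (h : κ ∈ gtSet r) : Antitone κ := by
  rw [mem_gtSet] at h
  cases k with
  | zero => intro i; exact i.elim0
  | succ k =>
    rw [Fin.antitone_iff_succ_le]
    intro i
    have h1 := (h i.succ).2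
    have h2 := (h i.castSucc).1
    rw [← Fin.succ_castSucc] at h1
    omega

lemma antitone_of_gt {k : ℕ} {r : Fin (k+1) → ℕ} {κ : Fin k → ℕ} (h : κ ∈ gtSet r) : Antitone r := by
  rw [mem_gtSet] at h
  rw [Fin.antitone_iff_succ_le]
  intro i
  have := h i
  omega

theorem pieri {R : Type*} [CommRing R] (k : ℕ) (u : R) (ν : Fin k → ℕ) (hν : Antitone ν)
    (y : Fin k → R) :
    gtSchur k ν y * ∏ j, (u + y j) =
      ∑ l ∈ vsSet ν, gtSchur k l y * ∏ i, u ^ (ν i + 1 - l i) := by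
  induction k with
  | zero =>
    have : vsSet ν = {ν} := by
      ext l; rw [mem_vsSet, mem_singleton]
      exact ⟨fun _ => Subsingleton.elim _ _, fun _ => ⟨fun i => i.elim0, fun i => i.elim0⟩⟩
    rw [this]; simp [gtSchur]
  | succ k ih =>
    set C : Finset (Fin k → ℕ) :=
      (Fintype.piFinset fun i => range (ν (Fin.castSucc i) + 2)).filter Antitone with hC
    have memC : ∀ ρ, ρ ∈ C ↔ (∀ i : Fin k, ρ i ≤ ν i.castSucc + 1) ∧ Antitone ρ := by
      intro ρ; simp [hC, Fintype.mem_piFinset, Nat.lt_succ_iff]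
    set Y := y (Fin.last k) with hY
    calc _ = ∑ κ ∈ gtSet ν, ∑ ρ ∈ vsSet κ, gtSchur k ρ (fun i => y i.castSucc) *
            ((u + Y) * (Y ^ (ν (Fin.last k)) *
              ∏ i : Fin k, (Y ^ (ν i.castSucc - κ i) * u ^ (κ i + 1 - ρ i)))) := by
          rw [gtSchur, sum_mul]
          apply sum_congr rfl
          intro κ hκ
          rw [Fin.prod_univ_castSucc]
          have := ih κ (gt_antitone hκ) (fun i => y i.castSucc)
          calc _ = (gtSchur k κ (fun i => y i.castSucc) * ∏ j : Fin k, (u + y j.castSucc)) *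
                ((u + Y) * (Y ^ (ν (Fin.last k)) * ∏ i : Fin k, Y ^ (ν i.castSucc - κ i))) := by
                rw [hY]; ring
            _ = _ := by
                rw [this, sum_mul]
                apply sum_congr rfl
                intro ρ _
                rw [prod_mul_distrib]
                ring
      _ = ∑ ρ ∈ C, ∑ κ ∈ Fintype.piFinset (fun i : Fin k => (Icc (ν i.succ) (ν i.castSucc)).filter
            (fun q => q ≤ ρ i ∧ ρ i ≤ q + 1)), gtSchur k ρ (fun i => y i.castSucc) *
            ((u + Y) * (Y ^ (ν (Fin.last k)) *
              ∏ i : Fin k, (Y ^ (ν i.castSucc - κ i) * u ^ (κ i + 1 - ρ i)))) := by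
          apply sum_comm'
          intro κ ρ
          rw [mem_gtSet, mem_vsSet, memC, Fintype.mem_piFinset]
          simp only [mem_filter, mem_Icc]
          constructor
          · rintro ⟨h1, h2, h3⟩
            exact ⟨fun i => ⟨h1 i, h2 i⟩, fun i => by have := h1 i; have := h2 i; omega, h3⟩
          · rintro ⟨h1, h2, h3⟩
            exact ⟨fun i => (h1 i).1, fun i => (h1 i).2, h3⟩
      _ = ∑ ρ ∈ C, gtSchur k ρ (fun i => y i.castSucc) * ∏ i : Fin (k+1), ∑ q ∈ (Icc (ν i) (ν i + 1)).filter
        (fun q => (Fin.snoc ρ 0 : Fin (k+1) → ℕ) i ≤ q ∧ q ≤ (Fin.cons (ν 0 + 1) ρ : Fin (k+1) → ℕ) i),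
        (u ^ (ν i + 1 - q) * Y ^ (q - (Fin.snoc ρ 0 : Fin (k+1) → ℕ) i)) := by
          apply sum_congr rfl
          intro ρ hρ
          rw [memC] at hρ
          rw [← local_id k u Y ν ρ hν hρ.2 hρ.1, prod_univ_sum]
          simp only [mul_sum]
      _ = ∑ ρ ∈ C, ∑ l ∈ Fintype.piFinset (fun i : Fin (k+1) => (Icc (ν i) (ν i + 1)).filter
        (fun q => (Fin.snoc ρ 0 : Fin (k+1) → ℕ) i ≤ q ∧ q ≤ (Fin.cons (ν 0 + 1) ρ : Fin (k+1) → ℕ) i)),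
         (gtSchur k ρ (fun i => y i.castSucc) * (Y ^ (l (Fin.last k)) * ∏ i : Fin k, Y ^ (l i.castSucc - ρ i))) * ∏ i, u ^ (ν i + 1 - l i) := by
          apply sum_congr rfl
          intro ρ hρ
          rw [prod_univ_sum, mul_sum]
          apply sum_congr rfl
          intro l _
          rw [prod_mul_distrib, Fin.prod_univ_castSucc (fun i => Y ^ _)]
          simp only [Fin.snoc_castSucc, Fin.snoc_last, Nat.sub_zero]
          ring
      _ = _ := by
          simp only [gtSchur, sum_mul]
          symm
          apply sum_comm'
          intro l ρ
          rw [mem_vsSet, memC, Fintype.mem_piFinset]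
          simp only [mem_filter, mem_Icc]
          constructor
          · rintro ⟨⟨h1, h2⟩, h3⟩
            have h4 := mem_gtSet.1 h3
            refine ⟨fun i => ⟨h1 i, ?_, ?_⟩, fun i => ?_, gt_antitone h3⟩
            · induction i using Fin.lastCases with
              | last => simp
              | cast i => simpa using (h4 i).2
            · induction i using Fin.cases with
              | zero => simpa using (h1 0).2
              | succ i => simpa using (h4 i).1
            · have := h1 i.castSucc; have := h4 i; omega
          · rintro ⟨h1, h2, h3⟩
            have h4 : ρ ∈ gtSet l := by
              rw [mem_gtSet]
              intro i
              have a := (h1 i.succ).2.2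
              have b := (h1 i.castSucc).2.1
              simp at a b
              exact ⟨a, b⟩
            exact ⟨⟨fun i => (h1 i).1, antitone_of_gt h4⟩, h4⟩

/-- conjugate of the complement -/
def cjg (n k : ℕ) (l : Fin n → ℕ) (j : Fin k) : ℕ :=
  (univ.filter (fun i : Fin n => l i < k - (j : ℕ))).card

lemma card_filter_upset (n : ℕ) (p : Fin n → Prop) [DecidablePred p] (hp : ∀ i j, i ≤ j → p i → p j) (i : Fin n) :
    p i ↔ n ≤ i + (univ.filter p).card := by
  constructor
  · intro h
    have : (Finset.Ici i).card ≤ (univ.filter p).card := by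
      apply card_le_card
      intro j hj
      simp at hj ⊢
      exact hp i j hj h
    rw [Fin.card_Ici] at this
    omega
  · intro h
    by_contra hn
    have : (univ.filter p).card ≤ (Finset.Ioi i).card := by
      apply card_le_card
      intro j hj
      simp at hj ⊢
      by_contra hji
      exact hn (hp j i (not_lt.1 hji) hj)
    rw [Fin.card_Ioi] at this
    have := i.2
    omega

lemma cjg_rel {n k : ℕ} {l : Fin n → ℕ} (hl : Antitone l) (i : Fin n) (j : Fin k) :
    l i + j < k ↔ n ≤ i + cjg n k l j := by
  unfold cjg
  rw [← card_filter_upset n (fun i => l i < k - (j : ℕ))]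
  · omega
  · intro a b hab h
    exact lt_of_le_of_lt (hl hab) h

lemma cjg_le (n k : ℕ) (l : Fin n → ℕ) (j : Fin k) : cjg n k l j ≤ n := by
  unfold cjg
  exact (card_le_univ _).trans (by simp)

lemma cjg_antitone (n k : ℕ) (l : Fin n → ℕ) : Antitone (cjg n k l) := by
  intro a b hab
  apply card_le_card
  intro i
  simp only [mem_filter, mem_univ, true_and]
  intro h
  have : (a : ℕ) ≤ b := hab
  omega

/-- the relation determines the sequence -/
lemma rel_unique {n k : ℕ} {f g : Fin n → ℕ} (hf : ∀ i, f i ≤ k) (hg : ∀ i, g i ≤ k)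
    (h : ∀ i (j : Fin k), f i + j < k ↔ g i + j < k) : f = g := by
  funext i
  have h1 := hf i
  have h2 := hg i
  by_contra hne
  rcases lt_or_gt_of_ne hne with hlt | hlt
  · have := h i ⟨k - g i, by omega⟩
    simp at this
    omega
  · have := h i ⟨k - f i, by omega⟩
    simp at this
    omega

lemma cjg_cjg {n k : ℕ} {l : Fin n → ℕ} (hl : Antitone l) (hk : ∀ i, l i ≤ k) :
    cjg k n (cjg n k l) = l := by
  apply rel_unique (k := k) (cjg_le _ _ _) hk
  intro i j
  rw [cjg_rel hl i j]
  have := cjg_rel (cjg_antitone n k l) j i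
  omega

lemma cjg_sum {n k : ℕ} {l : Fin n → ℕ} (hk : ∀ i, l i ≤ k) :
    ∑ j, cjg n k l j + ∑ i, l i = n * k := by
  have : ∑ j, cjg n k l j = ∑ i, (k - l i) := by
    unfold cjg
    simp only [card_filter]
    rw [sum_comm]
    apply sum_congr rfl
    intro i _
    rw [← card_filter]
    have : (univ.filter (fun j : Fin k => l i < k - (j : ℕ))) =
        univ.filter (fun j : Fin k => (j : ℕ) < k - l i) := by
      ext j; simp; omega
    rw [this, Fin.card_filter_val_lt]
    omega
  rw [this, ← sum_add_distrib, sum_congr rfl (g := fun _ => k)]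
  · simp
  · intro i _; have := hk i; omega

/-- interlacing corresponds to vertical strips -/
lemma cjg_vs {n k : ℕ} {l : Fin (n+1) → ℕ} {μ : Fin n → ℕ} (hl : Antitone l)
    (h : μ ∈ gtSet l) : cjg (n+1) k l ∈ vsSet (cjg n k μ) := by
  have hμ := gt_antitone h
  rw [mem_gtSet] at h
  rw [mem_vsSet]
  refine ⟨fun j => ?_, cjg_antitone _ _ _⟩
  have b1 := cjg_le n k μ j
  have b2 := cjg_le (n+1) k l j
  constructor
  · by_contra hc
    have r1 := cjg_rel hμ ⟨n - cjg n k μ j, by omega⟩ j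
    have r2 := cjg_rel hl (Fin.succ ⟨n - cjg n k μ j, by omega⟩) j
    have := (h ⟨n - cjg n k μ j, by omega⟩).1
    simp only [Fin.val_succ] at r1 r2
    omega
  · by_contra hc
    have r1 := cjg_rel hμ ⟨n + 1 - cjg (n+1) k l j, by omega⟩ j
    have r2 := cjg_rel hl (Fin.castSucc ⟨n + 1 - cjg (n+1) k l j, by omega⟩) j
    have := (h ⟨n + 1 - cjg (n+1) k l j, by omega⟩).2
    simp only [Fin.val_castSucc] at r1 r2
    omega

lemma cjg_gt {n k : ℕ} {l : Fin k → ℕ} {μ : Fin n → ℕ} (hμ : Antitone μ) (hk : ∀ i, μ i ≤ k)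
    (h : l ∈ vsSet (cjg n k μ)) : μ ∈ gtSet (cjg k (n+1) l) := by
  rw [mem_vsSet] at h
  obtain ⟨h, hl⟩ := h
  rw [mem_gtSet]
  intro i
  have b1 := cjg_le k (n+1) l i.succ
  have b2 := cjg_le k (n+1) l i.castSucc
  have b3 := hk i
  constructor
  · by_contra hc
    have hx : k - cjg k (n+1) l i.succ < k := by omega
    have r1 := cjg_rel hμ i (⟨_, hx⟩ : Fin k)
    have r2 := cjg_rel hl ⟨_, hx⟩ i.succ
    have := h ⟨_, hx⟩
    simp only [Fin.val_succ] at *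
    omega
  · by_contra hc
    have hx : k - μ i < k := by omega
    have r1 := cjg_rel hμ i (⟨_, hx⟩ : Fin k)
    have r2 := cjg_rel hl ⟨_, hx⟩ i.castSucc
    have := h ⟨_, hx⟩
    simp only [Fin.val_castSucc] at *
    omega

def boxSet (n k : ℕ) : Finset (Fin n → ℕ) :=
  (Fintype.piFinset fun _ => range (k+1)).filter Antitone

lemma mem_boxSet {n k : ℕ} {l : Fin n → ℕ} : l ∈ boxSet n k ↔ (∀ i, l i ≤ k) ∧ Antitone l := by
  simp [boxSet, Fintype.mem_piFinset]

lemma gtSchur_zero {R : Type*} [CommRing R] (k : ℕ) (y : Fin k → R) :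
    gtSchur k (fun _ => 0) y = 1 := by
  induction k with
  | zero => simp [gtSchur]
  | succ k ih =>
    have : gtSet (fun _ : Fin (k+1) => 0) = {fun _ => 0} := by
      ext κ
      rw [mem_gtSet, mem_singleton]
      constructor
      · intro h; funext i; have := h i; omega
      · rintro rfl i; simp
    rw [gtSchur, this, sum_singleton, ih]
    simp

theorem gt_main {R : Type*} [CommRing R] (n k : ℕ) (x : Fin n → R) (y : Fin k → R) :
    ∑ l ∈ boxSet n k, gtSchur n l x * gtSchur k (cjg n k l) y = ∏ i, ∏ j, (x i + y j) := by
  induction n with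
  | zero =>
    have : boxSet 0 k = {fun i => i.elim0} := by
      ext l
      rw [mem_boxSet, mem_singleton]
      exact ⟨fun _ => Subsingleton.elim _ _, fun _ => ⟨fun i => i.elim0, fun i => i.elim0⟩⟩
    rw [this, sum_singleton]
    have : cjg 0 k (fun i => i.elim0) = fun _ => 0 := by
      funext j; simp [cjg]
    rw [this, gtSchur_zero]
    simp [gtSchur]
  | succ n ih =>
    set X := x (Fin.last n) with hX
    rw [Fin.prod_univ_castSucc, ← ih (fun i => x i.castSucc), sum_mul]
    simp only [gtSchur, sum_mul]
    rw [sum_comm' (t' := boxSet n k) (s' := fun μ => (boxSet (n+1) k).filter (fun l => μ ∈ gtSet l))]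
    · apply sum_congr rfl
      intro μ hμ
      rw [mem_boxSet] at hμ
      rw [mul_assoc, ← hX, pieri k X (cjg n k μ) (cjg_antitone _ _ _) y, mul_sum]
      apply sum_nbij' (fun l => cjg (n+1) k l) (fun l => cjg k (n+1) l)
      · intro l hl
        rw [mem_filter, mem_boxSet] at hl
        exact cjg_vs hl.1.2 hl.2
      · intro l hl
        rw [mem_filter, mem_boxSet]
        exact ⟨⟨cjg_le _ _ _, cjg_antitone _ _ _⟩, cjg_gt hμ.2 hμ.1 hl⟩
      · intro l hl
        rw [mem_filter, mem_boxSet] at hl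
        exact cjg_cjg hl.1.2 hl.1.1
      · intro l hl
        rw [mem_vsSet] at hl
        apply cjg_cjg hl.2
        intro i
        have := hl.1 i
        have := cjg_le n k μ i
        omega
      · intro l hl
        rw [mem_filter, mem_boxSet] at hl
        obtain ⟨⟨h1, h2⟩, h3⟩ := hl
        have hv := (mem_vsSet.1 (cjg_vs (k := k) h2 h3)).1
        have e : l (Fin.last n) + ∑ i : Fin n, (l i.castSucc - μ i) =
            ∑ j, (cjg n k μ j + 1 - cjg (n+1) k l j) := by
          have s1 := cjg_sum h1
          have s2 := cjg_sum hμ.1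
          have s3 : ∑ i : Fin n, (l i.castSucc - μ i) + ∑ i, μ i = ∑ i : Fin n, l i.castSucc := by
            rw [← sum_add_distrib]
            apply sum_congr rfl
            intro i _
            have := mem_gtSet.1 h3 i
            omega
          have s4 : ∑ j, (cjg n k μ j + 1 - cjg (n+1) k l j) + ∑ j, cjg (n+1) k l j =
              ∑ j, cjg n k μ j + k := by
            rw [← sum_add_distrib, sum_congr rfl (g := fun j => cjg n k μ j + 1)]
            · simp [sum_add_distrib]
            · intro j _
              have := hv j
              omega
          rw [Fin.sum_univ_castSucc] at s1
          rw [add_mul] at s1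
          omega
        rw [prod_pow_eq_pow_sum, prod_pow_eq_pow_sum, ← pow_add, e]
        ring
    · intro l μ
      rw [mem_filter, mem_boxSet, mem_boxSet]
      constructor
      · rintro ⟨h1, h2⟩
        refine ⟨⟨h1, h2⟩, fun i => ?_, gt_antitone h2⟩
        exact (mem_gtSet.1 h2 i).2.trans (h1.1 _)
      · rintro ⟨h1, _⟩
        exact h1

lemma card_filter_downset (n : ℕ) (p : Fin n → Prop) [DecidablePred p]
    (hp : ∀ i j, i ≤ j → p j → p i) (i : Fin n) :
    p i ↔ (i : ℕ) < (univ.filter p).card := by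
  constructor
  · intro h
    have : (Finset.Iic i).card ≤ (univ.filter p).card := by
      apply card_le_card
      intro j hj
      simp at hj ⊢
      exact hp j i hj h
    rw [Fin.card_Iic] at this
    omega
  · intro h
    by_contra hn
    have : (univ.filter p).card ≤ (Finset.Iio i).card := by
      apply card_le_card
      intro j hj
      simp at hj ⊢
      by_contra hji
      exact hn (hp i j (not_lt.1 hji) hj)
    rw [Fin.card_Iio] at this
    omega

lemma ssyt_ge {m N : ℕ} {r : Fin m → ℕ} (hr : Antitone r) {T : ∀ i : Fin m, Fin (r i) → Fin N}
    (hT : IsSsyt r T) (a : ℕ) : ∀ (ha : a < m) (j : Fin (r ⟨a, ha⟩)), a ≤ (T ⟨a, ha⟩ j : ℕ) := by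
  induction a with
  | zero => intro _ _; omega
  | succ a ih =>
    intro ha j
    have hle : r ⟨a + 1, ha⟩ ≤ r ⟨a, by omega⟩ := hr (by simp)
    have h1 := ih (by omega) ⟨j, lt_of_lt_of_le j.2 hle⟩
    have h2 := hT.2 ⟨a, by omega⟩ ⟨a + 1, ha⟩ ⟨j, lt_of_lt_of_le j.2 hle⟩ j (by simp) rfl
    have h3 : (T ⟨a, by omega⟩ ⟨j, lt_of_lt_of_le j.2 hle⟩ : ℕ) < T ⟨a + 1, ha⟩ j := h2
    omega

/-- row lengths after deleting the largest entry -/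
def cutShape {k : ℕ} {r : Fin (k+1) → ℕ} (T : ∀ i : Fin (k+1), Fin (r i) → Fin (k+1))
    (i : Fin k) : ℕ := (univ.filter (fun j : Fin (r i.castSucc) => T i.castSucc j < Fin.last k)).card

lemma cutShape_spec {k : ℕ} {r : Fin (k+1) → ℕ} {T : ∀ i : Fin (k+1), Fin (r i) → Fin (k+1)}
    (hT : IsSsyt r T) (i : Fin k) (j : Fin (r i.castSucc)) :
    T i.castSucc j < Fin.last k ↔ (j : ℕ) < cutShape T i := by
  unfold cutShape
  rw [← card_filter_downset _ (fun j : Fin (r i.castSucc) => T i.castSucc j < Fin.last k)]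
  intro a b hab hb
  exact lt_of_le_of_lt (hT.1 _ a b hab) hb

lemma cutShape_mem {k : ℕ} {r : Fin (k+1) → ℕ} (hr : Antitone r)
    {T : ∀ i : Fin (k+1), Fin (r i) → Fin (k+1)}
    (hT : IsSsyt r T) : cutShape T ∈ gtSet r := by
  rw [mem_gtSet]
  intro i
  constructor
  · by_contra hc
    have hle : r i.succ ≤ r i.castSucc := hr (Fin.castSucc_lt_succ).le
    have h1 := cutShape_spec hT i ⟨cutShape T i, by omega⟩
    have h2 := hT.2 i.castSucc i.succ ⟨cutShape T i, by omega⟩ ⟨cutShape T i, by omega⟩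
      Fin.castSucc_lt_succ rfl
    exact absurd (h1.1 (lt_of_lt_of_le h2 (Fin.le_last _))) (lt_irrefl _)
  · unfold cutShape
    exact (card_le_univ _).trans (by simp)

/-- fill up a tableau with the largest entry -/
def fillT {k : ℕ} (r : Fin (k+1) → ℕ) (κ : Fin k → ℕ) (U : ∀ i : Fin k, Fin (κ i) → Fin k) :
    ∀ i : Fin (k+1), Fin (r i) → Fin (k+1) := fun i j =>
  if h : ∃ h : (i : ℕ) < k, (j : ℕ) < κ ⟨i, h⟩ then (U ⟨i, h.1⟩ ⟨j, h.2⟩).castSucc else Fin.last k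

lemma fillT_castSucc {k : ℕ} (r : Fin (k+1) → ℕ) (κ : Fin k → ℕ)
    (U : ∀ i : Fin k, Fin (κ i) → Fin k) (i : Fin k) (j : Fin (r i.castSucc)) :
    fillT r κ U i.castSucc j = if h : (j : ℕ) < κ i then (U i ⟨j, h⟩).castSucc else Fin.last k := by
  unfold fillT
  simp

lemma fillT_last {k : ℕ} (r : Fin (k+1) → ℕ) (κ : Fin k → ℕ)
    (U : ∀ i : Fin k, Fin (κ i) → Fin k) (j : Fin (r (Fin.last k))) :
    fillT r κ U (Fin.last k) j = Fin.last k := by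
  unfold fillT
  simp

lemma fillT_ssyt {k : ℕ} {r : Fin (k+1) → ℕ} {κ : Fin k → ℕ} (hκ : κ ∈ gtSet r)
    {U : ∀ i : Fin k, Fin (κ i) → Fin k} (hU : IsSsyt κ U) : IsSsyt r (fillT r κ U) := by
  have hr := antitone_of_gt hκ
  have ha := gt_antitone hκ
  rw [mem_gtSet] at hκ
  constructor
  · intro i j j' hj
    induction i using Fin.lastCases with
    | last => rw [fillT_last, fillT_last]
    | cast i =>
      rw [fillT_castSucc, fillT_castSucc]
      by_cases h' : (j' : ℕ) < κ i
      · have h : (j : ℕ) < κ i := by omega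
        rw [dif_pos h, dif_pos h']
        exact Fin.castSucc_le_castSucc_iff.2 (hU.1 i _ _ hj)
      · rw [dif_neg h']
        exact Fin.le_last _
  · intro i i' j j' hi hj
    induction i using Fin.lastCases with
    | last => exact absurd hi (not_lt.2 (Fin.le_last _))
    | cast i =>
      have hlt : (j : ℕ) < κ i := by
        have h1 : r i' ≤ r i.succ := hr (by
          rw [Fin.lt_def] at hi; rw [Fin.le_def]; simp at hi ⊢; omega)
        have h2 := (hκ i).1
        have h3 := j'.2
        omega
      rw [fillT_castSucc, dif_pos hlt]
      induction i' using Fin.lastCases with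
      | last => rw [fillT_last]; exact Fin.castSucc_lt_last _
      | cast i' =>
        rw [fillT_castSucc]
        split_ifs with h'
        · exact Fin.castSucc_lt_castSucc_iff.2
            (hU.2 i i' _ _ (Fin.castSucc_lt_castSucc_iff.1 hi) hj)
        · exact Fin.castSucc_lt_last _

lemma cutShape_fillT {k : ℕ} {r : Fin (k+1) → ℕ} {κ : Fin k → ℕ} (hκ : κ ∈ gtSet r)
    (U : ∀ i : Fin k, Fin (κ i) → Fin k) : cutShape (fillT r κ U) = κ := by
  rw [mem_gtSet] at hκ
  funext i
  unfold cutShape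
  have : (univ.filter (fun j : Fin (r i.castSucc) => fillT r κ U i.castSucc j < Fin.last k)) =
      univ.filter (fun j : Fin (r i.castSucc) => (j : ℕ) < κ i) := by
    ext j
    simp only [mem_filter, mem_univ, true_and]
    rw [fillT_castSucc]
    split_ifs with h
    · simp [h, Fin.castSucc_lt_last]
    · simp [h]
  rw [this, Fin.card_filter_val_lt]
  have := (hκ i).2
  omega

lemma prod_row {R : Type*} [CommRing R] (a b : ℕ) (hab : a ≤ b) (f : Fin a → R) (c : R) :
    ∏ j : Fin b, (if h : (j : ℕ) < a then f ⟨j, h⟩ else c) = (∏ j, f j) * c ^ (b - a) := by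
  obtain ⟨d, rfl⟩ := Nat.exists_eq_add_of_le hab
  rw [Fin.prod_univ_add]
  simp

lemma schur_branch {R : Type*} [CommRing R] (k : ℕ) (r : Fin (k+1) → ℕ) (hr : Antitone r)
    (y : Fin (k+1) → R) :
    schurPoly (k+1) r y = ∑ κ ∈ gtSet r, schurPoly k κ (fun i => y i.castSucc) *
      (y (Fin.last k) ^ (r (Fin.last k)) * ∏ i : Fin k, y (Fin.last k) ^ (r i.castSucc - κ i)) := by
  unfold schurPoly
  have hmaps : ∀ T ∈ ssytFinset (k+1) r, cutShape T ∈ gtSet r := by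
    intro T hT
    exact cutShape_mem hr (by simpa [ssytFinset] using hT)
  rw [← sum_fiberwise_of_maps_to hmaps]
  apply sum_congr rfl
  intro κ hκ
  rw [sum_mul]
  symm
  have hκ' := mem_gtSet.1 hκ
  apply sum_bij (fun U _ => fillT r κ U)
  · intro U hU
    have hU : IsSsyt κ U := by simpa [ssytFinset] using hU
    rw [mem_filter]
    refine ⟨?_, cutShape_fillT hκ U⟩
    simpa [ssytFinset] using fillT_ssyt hκ hU
  · intro U _ V _ h
    funext i j
    have := congrFun (congrFun h i.castSucc) ⟨j, lt_of_lt_of_le j.2 (hκ' i).2⟩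
    rw [fillT_castSucc, fillT_castSucc] at this
    simpa using this
  · intro T hT
    rw [mem_filter] at hT
    obtain ⟨hT, hc⟩ := hT
    have hT : IsSsyt r T := by simpa [ssytFinset] using hT
    have spec : ∀ (i : Fin k) (j : Fin (r i.castSucc)),
        T i.castSucc j < Fin.last k ↔ (j : ℕ) < κ i := by
      intro i j; rw [cutShape_spec hT i j, hc]
    let U : ∀ i : Fin k, Fin (κ i) → Fin k := fun i j =>
      (T i.castSucc ⟨j, lt_of_lt_of_le j.2 (hκ' i).2⟩).castPred
        (((spec i ⟨j, lt_of_lt_of_le j.2 (hκ' i).2⟩).2 j.2).ne)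
    refine ⟨U, ?_, ?_⟩
    · have : IsSsyt κ U := by
        constructor
        · intro i j j' h
          exact hT.1 i.castSucc ⟨j, lt_of_lt_of_le j.2 (hκ' i).2⟩ ⟨j', lt_of_lt_of_le j'.2 (hκ' i).2⟩ h
        · intro i i' j j' hi h
          exact hT.2 i.castSucc i'.castSucc ⟨j, lt_of_lt_of_le j.2 (hκ' i).2⟩
            ⟨j', lt_of_lt_of_le j'.2 (hκ' i').2⟩ hi h
      simpa [ssytFinset] using this
    · funext i j
      induction i using Fin.lastCases with
      | last =>
        rw [fillT_last]
        have := ssyt_ge hr hT k (Nat.lt_succ_self k) j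
        exact le_antisymm (Fin.le_def.2 this) (Fin.le_last _)
      | cast i =>
        rw [fillT_castSucc]
        split_ifs with h
        · simp [U]
        · rw [← spec] at h
          exact (le_antisymm (Fin.le_last _) (not_lt.1 h)).symm
  · intro U _
    rw [Fin.prod_univ_castSucc]
    simp only [fillT_last, fillT_castSucc, prod_const, card_univ, Fintype.card_fin]
    have : ∀ i : Fin k, ∏ j : Fin (r i.castSucc),
        y (if h : (j : ℕ) < κ i then (U i ⟨j, h⟩).castSucc else Fin.last k) =
        (∏ j : Fin (κ i), y (U i j).castSucc) * y (Fin.last k) ^ (r i.castSucc - κ i) := by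
      intro i
      rw [← prod_row _ _ (hκ' i).2]
      apply prod_congr rfl
      intro j _
      split_ifs <;> rfl
    rw [prod_congr rfl (fun i _ => this i), prod_mul_distrib]
    ring

lemma schur_eq_gt {R : Type*} [CommRing R] (k : ℕ) (r : Fin k → ℕ) (hr : Antitone r)
    (y : Fin k → R) : schurPoly k r y = gtSchur k r y := by
  induction k with
  | zero =>
    have : ssytFinset 0 r = univ := by
      ext T
      simp only [ssytFinset, mem_filter, mem_univ, true_and, iff_true]
      exact ⟨fun i => i.elim0, fun i => i.elim0⟩
    simp [schurPoly, this, gtSchur]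
  | succ k ih =>
    rw [schur_branch k r hr, gtSchur]
    apply sum_congr rfl
    intro κ hκ
    rw [ih κ (gt_antitone hκ)]

/-- Alternative dual Cauchy identity: summing over partitions `λ` inside an `n × k`
rectangle, `Σ_λ s_λ(x) s_{λ̄'}(y) = ∏_{i,j} (x_i + y_j)`, where `λ̄'` is the conjugate
of the complement of `λ` in the rectangle (so `λ̄'_j = #{i : λ_i ≤ k - j}`). -/
theorem stmt7 {R : Type*} [CommRing R] (n k : ℕ) (x : Fin n → R) (y : Fin k → R) :
    ∑ l ∈ (Finset.univ.filter
        (fun l : Fin n → Fin (k + 1) => ∀ i j : Fin n, i ≤ j → l j ≤ l i)),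
      schurPoly n (fun i => (l i : ℕ)) x
        * schurPoly k (fun j : Fin k =>
            (Finset.univ.filter (fun i : Fin n => (l i : ℕ) < k - (j : ℕ))).card) y
      = ∏ i : Fin n, ∏ j : Fin k, (x i + y j) := by
  rw [← gt_main n k x y]
  apply sum_bij (fun l _ => fun i => (l i : ℕ))
  · intro l hl
    rw [mem_filter] at hl
    rw [mem_boxSet]
    exact ⟨fun i => Nat.lt_succ_iff.1 (l i).2, fun i j hij => hl.2 i j hij⟩
  · intro l _ m _ h
    funext i
    exact Fin.ext (congrFun h i)
  · intro l hl
    rw [mem_boxSet] at hl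
    refine ⟨fun i => ⟨l i, Nat.lt_succ_iff.2 (hl.1 i)⟩, ?_, rfl⟩
    rw [mem_filter]
    exact ⟨mem_univ _, fun i j hij => hl.2 hij⟩
  · intro l hl
    rw [mem_filter] at hl
    rw [← schur_eq_gt n _ (fun i j hij => hl.2 i j hij),
      ← schur_eq_gt k _ (cjg_antitone n k _)]
    rfl

end
end

section
/- Let λ be a partition inside an n×k rectangle, let M(λ) = det[ C(k+i, j+λ_{n-j}) ]_{i,j=0}^{n-1}, and let λ̄' be the conjugate of the complement of λ in the n×k rectangle. Then M(λ) equals the number of semistandard Young tableaux of shape λ̄' with entries in {1,...,k}. Equivalently, M(λ) = (∏_{m=0}^{n-1} (k+m)!) · (∏_{1≤i<j≤n} (a_i - a_j)) / (∏_{i=1}^{n} a_i! (k+n-1-a_i)!) with a_i = λ_i + n - i. -/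
open Finset

noncomputable section
open scoped Classical

theorem aux_prod (n k : ℕ) (l : Fin n → ℕ)  (hbd : ∀ i, l i ≤ k) :
    Matrix.det (Matrix.of fun i j : Fin n =>
        (((k + (i : ℕ)).choose ((j : ℕ) + l j.rev)) : ℚ))
      = (∏ m ∈ Finset.range n, ((k + m).factorial : ℚ))
        * (∏ i : Fin n, ∏ j ∈ Finset.Ioi i,
            (((l i + (n - 1 - (i : ℕ))) : ℚ) - ((l j + (n - 1 - (j : ℕ))) : ℚ)))
        / (∏ i : Fin n, ((l i + (n - 1 - (i : ℕ))).factorial : ℚ)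
            * ((k + n - 1 - (l i + (n - 1 - (i : ℕ)))).factorial : ℚ)) := by
  have key : ∀ (j i : Fin n), (((k + (i.rev : ℕ)).choose ((j.rev : ℕ) + l j)) : ℚ)
      = (((l j + (n - 1 - (j : ℕ))).factorial : ℚ)
            * ((k + n - 1 - (l j + (n - 1 - (j : ℕ)))).factorial : ℚ))⁻¹ *
        (((k + (i.rev : ℕ)).factorial : ℚ) *
          (descPochhammer ℚ (i : ℕ)).eval
            (((k + n - 1 - (l j + (n - 1 - (j : ℕ))) : ℕ)) : ℚ)) := by
    intro j i
    have hj := hbd j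
    rw [descPochhammer_eval_eq_descFactorial]
    obtain ⟨a, ha⟩ : ∃ a, a = l j + (n - 1 - (j : ℕ)) := ⟨_, rfl⟩
    have h1 : (j.rev : ℕ) + l j = a := by rw [Fin.val_rev]; omega
    obtain ⟨x, hx⟩ : ∃ x, x = k + n - 1 - a := ⟨_, rfl⟩
    rw [h1, ← ha, ← hx]
    have hi : (i.rev : ℕ) = n - 1 - i := by rw [Fin.val_rev]; omega
    rw [hi]
    have hf : (a.factorial : ℚ) ≠ 0 := by positivity
    have hxf : (x.factorial : ℚ) ≠ 0 := by positivity
    by_cases hlt : k + (n - 1 - (i : ℕ)) < a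
    · rw [Nat.choose_eq_zero_of_lt hlt, Nat.descFactorial_of_lt (by omega)]; simp
    · rw [Nat.cast_choose ℚ (by omega : a ≤ k + (n - 1 - (i : ℕ)))]
      have h2 := Nat.factorial_mul_descFactorial (by omega : (i : ℕ) ≤ x)
      have h3 : x - i = k + (n - 1 - (i : ℕ)) - a := by omega
      rw [h3] at h2
      have h4 : ((k + (n - 1 - (i : ℕ)) - a).factorial : ℚ) ≠ 0 := by positivity
      have h2' : ((k + (n - 1 - (i : ℕ)) - a).factorial : ℚ) * (x.descFactorial i : ℚ)
        = (x.factorial : ℚ) := by exact_mod_cast h2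
      rw [← h2'] at hxf ⊢
      have h5 := right_ne_zero_of_mul hxf
      field_simp
  rw [← Matrix.det_submatrix_equiv_self (Fin.revPerm), ← Matrix.det_transpose]
  have : (Matrix.submatrix (Matrix.of fun i j : Fin n =>
        (((k + (i : ℕ)).choose ((j : ℕ) + l j.rev)) : ℚ)) Fin.revPerm Fin.revPerm).transpose
      = Matrix.of fun j i : Fin n => (((l j + (n - 1 - (j : ℕ))).factorial : ℚ)
            * ((k + n - 1 - (l j + (n - 1 - (j : ℕ)))).factorial : ℚ))⁻¹ *
          (Matrix.of (fun j i : Fin n => ((k + (i.rev : ℕ)).factorial : ℚ) *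
          (Matrix.of fun j i : Fin n => (descPochhammer ℚ (i : ℕ)).eval
            (((k + n - 1 - (l j + (n - 1 - (j : ℕ))) : ℕ)) : ℚ)) j i)) j i := by
    ext j i
    simpa using key j i
  rw [this, Matrix.det_mul_column, Matrix.det_mul_row,
    ← Matrix.det_eval_matrixOfPolynomials_eq_det_vandermonde
      (fun j : Fin n => (((k + n - 1 - (l j + (n - 1 - (j : ℕ))) : ℕ)) : ℚ))
      (fun i => descPochhammer ℚ (i : ℕ))
      (fun i => descPochhammer_natDegree ℚ (i : ℕ)) (fun i => monic_descPochhammer ℚ i),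
    Matrix.det_vandermonde]
  have h1 : ∏ i : Fin n, ((k + (i.rev : ℕ)).factorial : ℚ)
      = ∏ m ∈ Finset.range n, ((k + m).factorial : ℚ) := by
    rw [← Fin.prod_univ_eq_prod_range (fun m => ((k + m).factorial : ℚ))]
    exact Equiv.prod_comp Fin.revPerm (fun i : Fin n => ((k + (i : ℕ)).factorial : ℚ))
  have h2 : ∀ j : Fin n, (((k + n - 1 - (l j + (n - 1 - (j : ℕ))) : ℕ)) : ℚ)
      = k + n - 1 - (l j + (n - 1 - (j : ℕ))) := by
    intro j
    have := hbd j
    have hj := j.2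
    rw [Nat.cast_sub (by omega), Nat.cast_sub (by omega), Nat.cast_add, Nat.cast_add,
      Nat.cast_sub (by omega), Nat.cast_sub (by omega)]
    simp
  rw [h1, Finset.prod_inv_distrib, div_eq_inv_mul]
  congr 2
  refine Finset.prod_congr rfl fun i _ => Finset.prod_congr rfl fun j _ => ?_
  rw [h2, h2]; ring

/-- binomial coefficient with integer lower index -/
def zbin (m : ℕ) (a : ℤ) : ℚ := if a < 0 then 0 else (m.choose a.toNat : ℚ)

theorem zbin_succ (m : ℕ) (a : ℤ) : zbin (m + 1) a = zbin m (a - 1) + zbin m a := by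
  unfold zbin
  rcases lt_trichotomy a 0 with h | h | h
  · rw [if_pos h, if_pos h, if_pos (by omega)]; simp
  · subst h; simp
  · obtain ⟨b, rfl⟩ : ∃ b : ℕ, a = b + 1 := ⟨(a - 1).toNat, by omega⟩
    rw [if_neg (by omega), if_neg (by omega), if_neg (by omega)]
    have : ((b : ℤ) + 1).toNat = b + 1 := by omega
    rw [this]
    simp [Nat.choose_succ_succ]

/-- families of columns -/
def colFam (n k : ℕ) (d : Fin n → ℤ) : Finset (Fin n → Finset ℕ) :=
  (Fintype.piFinset fun _ => (Finset.range k).powerset).filter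
    (fun S => (∀ p, ((S p).card : ℤ) + d p = k) ∧
      ∀ p q, p ≤ q → ∀ t, ((S q).filter (· < t)).card ≤ ((S p).filter (· < t)).card)

theorem mem_colFam {n k : ℕ} {d : Fin n → ℤ} {S : Fin n → Finset ℕ} :
    S ∈ colFam n k d ↔ (∀ p, ∀ x ∈ S p, x < k) ∧ (∀ p, ((S p).card : ℤ) + d p = k) ∧
      ∀ p q, p ≤ q → ∀ t, ((S q).filter (· < t)).card ≤ ((S p).filter (· < t)).card := by
  simp [colFam, Fintype.mem_piFinset, Finset.subset_iff]

theorem colFam_empty_of_not_mono {n k : ℕ} {d : Fin n → ℤ} (hd : ¬ Monotone d) :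
    (colFam n k d).card = 0 := by
  rw [Finset.card_eq_zero, Finset.eq_empty_iff_forall_notMem]
  intro S hS
  rw [mem_colFam] at hS
  obtain ⟨h1, h2, h3⟩ := hS
  apply hd
  intro p q hpq
  have := h3 p q hpq k
  rw [Finset.filter_true_of_mem (h1 p), Finset.filter_true_of_mem (h1 q)] at this
  have := h2 p
  have := h2 q
  omega

theorem colFam_succ {n k : ℕ} {d : Fin n → ℤ} (hd : Monotone d) :
    (colFam n (k + 1) d).card =
      ∑ E : Finset (Fin n), (colFam n k (fun p => d p - if p ∈ E then 1 else 0)).card := by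
  rw [Finset.card_eq_sum_card_fiberwise
    (f := fun S : Fin n → Finset ℕ => Finset.univ.filter (fun p => k ∉ S p)) (t := Finset.univ)
    (by intro _ _; simp)]
  refine Finset.sum_congr rfl fun E _ => ?_
  have hlt : ∀ (A : Finset ℕ) t, t ≤ k → (A.erase k).filter (· < t) = A.filter (· < t) := by
    intro A t ht
    ext x; simp only [Finset.mem_filter, Finset.mem_erase]
    constructor
    · rintro ⟨⟨_, h⟩, h'⟩; exact ⟨h, h'⟩
    · rintro ⟨h, h'⟩; exact ⟨⟨by omega, h⟩, h'⟩
  refine Finset.card_nbij' (fun S p => (S p).erase k)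
    (fun S p => if p ∈ E then S p else insert k (S p)) ?_ ?_ ?_ ?_
  · intro S hS
    simp only [Finset.coe_filter, Set.mem_ofPred_eq, mem_colFam] at hS
    obtain ⟨⟨h1, h2, h3⟩, hE⟩ := hS
    have hmem : ∀ p, p ∈ E ↔ k ∉ S p := by intro p; rw [← hE]; simp
    rw [Finset.mem_coe, mem_colFam]
    beta_reduce
    have g1 : ∀ p, ∀ x ∈ (S p).erase k, x < k := by
      intro p x hx
      rw [Finset.mem_erase] at hx
      have := h1 p x hx.2
      omega
    have g3 : ∀ p q, p ≤ q → ∀ t ≤ k, (((S q).erase k).filter (· < t)).card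
        ≤ (((S p).erase k).filter (· < t)).card := by
      intro p q hpq t ht
      rw [hlt _ _ ht, hlt _ _ ht]; exact h3 p q hpq t
    refine ⟨g1, ?_, ?_⟩
    · intro p
      have := h2 p
      by_cases hk : k ∈ S p
      · have hc := Finset.card_erase_add_one hk
        have : p ∉ E := by rw [hmem]; simpa using hk
        rw [if_neg this]; push_cast at *; omega
      · rw [Finset.erase_eq_of_notMem hk, if_pos ((hmem p).2 hk)]; push_cast at *; omega
    · intro p q hpq t
      by_cases ht : t ≤ k
      · exact g3 p q hpq t ht
      · have := g3 p q hpq k le_rfl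
        rw [Finset.filter_true_of_mem (g1 p), Finset.filter_true_of_mem (g1 q)] at this
        rwa [Finset.filter_true_of_mem (s := (S q).erase k)
            (fun x hx => by have := g1 q x hx; omega),
          Finset.filter_true_of_mem (s := (S p).erase k)
            (fun x hx => by have := g1 p x hx; omega)]
  · intro S hS
    rw [Finset.mem_coe, mem_colFam] at hS
    obtain ⟨h1, h2, h3⟩ := hS
    have hk : ∀ p, k ∉ S p := fun p h => lt_irrefl _ (h1 p k h)
    simp only [Finset.coe_filter, Set.mem_ofPred_eq, mem_colFam]
    have g1 : ∀ p, ∀ x ∈ (if p ∈ E then S p else insert k (S p)), x < k + 1 := by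
      intro p x hx
      split_ifs at hx
      · have := h1 p x hx; omega
      · rw [Finset.mem_insert] at hx
        rcases hx with h | h
        · omega
        · have := h1 p x h; omega
    have g2 : ∀ p, ((if p ∈ E then S p else insert k (S p)).card : ℤ) + d p = (k + 1 : ℕ) := by
      intro p
      have := h2 p
      split_ifs at this ⊢
      · push_cast; omega
      · rw [Finset.card_insert_of_notMem (hk p)]; push_cast; omega
    have herase : ∀ p, (if p ∈ E then S p else insert k (S p)).erase k = S p := by
      intro p
      split_ifs
      · exact Finset.erase_eq_of_notMem (hk p)
      · exact Finset.erase_insert (hk p)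
    refine ⟨⟨g1, g2, ?_⟩, ?_⟩
    · intro p q hpq t
      by_cases ht : t ≤ k
      · rw [← hlt (if q ∈ E then S q else insert k (S q)) _ ht,
          ← hlt (if p ∈ E then S p else insert k (S p)) _ ht, herase, herase]; exact h3 p q hpq t
      · rw [Finset.filter_true_of_mem (s := if q ∈ E then S q else insert k (S q))
            (fun x hx => by have := g1 q x hx; omega),
          Finset.filter_true_of_mem (s := if p ∈ E then S p else insert k (S p))
            (fun x hx => by have := g1 p x hx; omega)]
        have a := g2 p
        have b := g2 q
        have c := hd hpq
        omega
    · ext p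
      simp only [Finset.mem_filter, Finset.mem_univ, true_and]
      by_cases hp : p ∈ E <;> simp [hp, hk p]
  · intro S hS
    simp only [Finset.coe_filter, Set.mem_ofPred_eq, mem_colFam] at hS
    obtain ⟨⟨h1, h2, h3⟩, hE⟩ := hS
    have hmem : ∀ p, p ∈ E ↔ k ∉ S p := by intro p; rw [← hE]; simp
    funext p
    by_cases hk : k ∈ S p
    · have : p ∉ E := by rw [hmem]; simpa using hk
      simp [this, Finset.insert_erase hk]
    · simp [(hmem p).2 hk, Finset.erase_eq_of_notMem hk]
  · intro S hS
    rw [Finset.mem_coe, mem_colFam] at hS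
    obtain ⟨h1, h2, h3⟩ := hS
    have hk : ∀ p, k ∉ S p := fun p h => lt_irrefl _ (h1 p k h)
    funext p
    by_cases hp : p ∈ E
    · simp [hp, Finset.erase_eq_of_notMem (hk p)]
    · simp [hp, Finset.erase_insert (hk p)]

theorem det_colFam (n k : ℕ) (d : Fin n → ℤ) (hd : Monotone d) :
    Matrix.det (Matrix.of fun p i : Fin n => zbin (k + (i : ℕ)) ((p : ℕ) + d p))
      = ((colFam n k d).card : ℚ) := by
  induction k generalizing d with
  | zero =>
    by_cases h0 : d = 0
    · subst h0
      have hc : colFam n 0 0 = {fun _ => ∅} := by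
        ext S
        rw [mem_colFam, Finset.mem_singleton]
        constructor
        · rintro ⟨h, _, _⟩
          funext p
          exact Finset.eq_empty_of_forall_notMem fun x hx => by have := h p x hx; omega
        · rintro rfl; simp
      rw [hc, Matrix.det_of_isUpperTriangular]
      · have h : ∀ x : Fin n, ¬ ((x : ℕ) : ℤ) < 0 := fun x => by omega
        simp [zbin, h]
      · intro i j hij
        simp only [Matrix.of_apply, zbin]
        rw [if_neg (by simp)]
        have : (j : ℕ) < i := hij
        rw [Nat.choose_eq_zero_of_lt (by simpa using this)]; simp
    · have hc : (colFam n 0 d).card = 0 := by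
        rw [Finset.card_eq_zero, Finset.eq_empty_iff_forall_notMem]
        intro S hS
        rw [mem_colFam] at hS
        obtain ⟨h1, h2, h3⟩ := hS
        apply h0
        funext p
        have : S p = ∅ := Finset.eq_empty_of_forall_notMem fun x hx => by
          have := h1 p x hx; omega
        have := h2 p
        simp_all
      rw [hc]
      obtain ⟨p, hp⟩ := Function.ne_iff.1 h0
      rcases lt_or_gt_of_ne hp with h | h
      · have hn : 0 < n := by have := p.2; omega
        rw [Matrix.det_eq_zero_of_row_eq_zero ⟨0, hn⟩]
        · simp
        intro i
        have : d ⟨0, hn⟩ ≤ d p := hd (Fin.mk_le_of_le_val (Nat.zero_le _))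
        simp only [Pi.zero_apply] at h
        simp only [Matrix.of_apply, zbin]
        rw [if_pos (by push_cast; omega)]
      · have hn : n - 1 < n := by have := p.2; omega
        rw [Matrix.det_eq_zero_of_row_eq_zero ⟨n - 1, hn⟩]
        · simp
        intro i
        have : d p ≤ d ⟨n - 1, hn⟩ := hd (Fin.mk_le_mk.2 (by have := p.2; omega))
        simp only [Pi.zero_apply] at h
        simp only [Matrix.of_apply, zbin]
        split_ifs
        · rfl
        · rw [Nat.choose_eq_zero_of_lt (by have := i.2; omega)]; simp
  | succ k ih =>
    rw [colFam_succ hd]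
    have hsplit : (Matrix.of fun p i : Fin n => zbin (k + 1 + (i : ℕ)) ((p : ℕ) + d p))
        = (fun p i : Fin n => zbin (k + (i : ℕ)) ((p : ℕ) + d p - 1))
        + (fun p i : Fin n => zbin (k + (i : ℕ)) ((p : ℕ) + d p)) := by
      ext p i
      simp only [Matrix.of_apply, Pi.add_apply]
      rw [show k + 1 + (i : ℕ) = k + i + 1 by ring, zbin_succ]
    rw [hsplit]
    have := (Matrix.detRowAlternating (n := Fin n) (R := ℚ)).toMultilinearMap.map_add_univ
      (fun p i : Fin n => zbin (k + (i : ℕ)) ((p : ℕ) + d p - 1))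
      (fun p i : Fin n => zbin (k + (i : ℕ)) ((p : ℕ) + d p))
    refine Eq.trans this ?_
    push_cast
    refine Finset.sum_congr rfl fun E _ => ?_
    have hE : (E.piecewise (fun p i : Fin n => zbin (k + (i : ℕ)) ((p : ℕ) + d p - 1))
      (fun p i : Fin n => zbin (k + (i : ℕ)) ((p : ℕ) + d p)))
      = (Matrix.of fun p i : Fin n => zbin (k + (i : ℕ))
          ((p : ℕ) + (fun p => d p - if p ∈ E then 1 else 0) p)) := by
      funext p i
      by_cases hp : p ∈ E
      · simp [Finset.piecewise, hp, add_sub_assoc]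
      · simp [Finset.piecewise, hp]
    rw [hE]
    change Matrix.det _ = _
    by_cases hm : Monotone (fun p => d p - if p ∈ E then 1 else 0)
    · exact ih _ hm
    · rw [colFam_empty_of_not_mono hm, Nat.cast_zero]
      rcases n with _ | n
      · exact absurd (fun a => a.elim0) hm
      rw [Fin.monotone_iff_le_succ] at hm
      push Not at hm
      obtain ⟨i, hi⟩ := hm
      have hd' := hd (Fin.castSucc_le_succ i)
      refine Matrix.det_zero_of_row_eq (i := i.castSucc) (j := i.succ) ?_ ?_
      · exact (Fin.castSucc_lt_succ).ne
      · funext j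
        simp only [Matrix.of_apply]
        congr 1
        simp only [Fin.val_castSucc, Fin.val_succ]
        split_ifs at hi ⊢ <;> push_cast <;> omega

theorem ssyt_card (n k : ℕ) (r : Fin k → ℕ) (c : Fin n → ℕ) (hc : Antitone c)
    (hrn : ∀ j, r j ≤ n) (hck : ∀ p, c p ≤ k)
    (hcell : ∀ (j : Fin k) (p : Fin n), (p : ℕ) < r j ↔ (j : ℕ) < c p) :
    (ssytFinset k r).card = (colFam n k (fun p => (k : ℤ) - c p)).card := by
  let col (T : ∀ i : Fin k, Fin (r i) → Fin k) (p : Fin n) (x : Fin (c p)) : ℕ :=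
    (T ⟨x, lt_of_lt_of_le x.2 (hck p)⟩ ⟨p, (hcell _ p).2 x.2⟩ : ℕ)
  have hmono : ∀ T, IsSsyt r T → ∀ p, StrictMono (col T p) := by
    intro T hT p x y hxy
    exact hT.2 _ _ _ _ (by simpa using hxy) rfl
  have hcard : ∀ T, IsSsyt r T → ∀ p, (Finset.univ.image (col T p)).card = c p := by
    intro T hT p
    rw [Finset.card_image_of_injective _ (hmono T hT p).injective]; simp
  refine Finset.card_bij (fun T _ p => Finset.univ.image (col T p)) ?_ ?_ ?_
  · intro T hT
    have hT : IsSsyt r T := by simpa [ssytFinset] using hT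
    rw [mem_colFam]
    refine ⟨?_, ?_, ?_⟩
    · intro p x hx
      simp only [Finset.mem_image, Finset.mem_univ, true_and] at hx
      obtain ⟨y, rfl⟩ := hx
      exact Fin.is_lt _
    · intro p
      rw [hcard T hT p]; ring
    · intro p q hpq t
      rw [Finset.filter_image, Finset.filter_image,
        Finset.card_image_of_injective _ (hmono T hT p).injective,
        Finset.card_image_of_injective _ (hmono T hT q).injective]
      refine Finset.card_le_card_of_injOn (fun x => Fin.castLE (hc hpq) x) ?_ ?_
      · intro x hx
        simp only [Finset.coe_filter, Finset.mem_univ, true_and, Set.mem_ofPred_eq] at hx ⊢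
        refine lt_of_le_of_lt ?_ hx
        exact hT.1 _ _ _ (by simpa using hpq)
      · intro x _ y _ h
        simpa using h
  · intro T hT T' hT' h
    have hT : IsSsyt r T := by simpa [ssytFinset] using hT
    have hT' : IsSsyt r T' := by simpa [ssytFinset] using hT'
    funext j p
    have hp : (p : ℕ) < n := lt_of_lt_of_le p.2 (hrn j)
    have h1 : Finset.univ.image (col T ⟨p, hp⟩) = Finset.univ.image (col T' ⟨p, hp⟩) :=
      congrFun h ⟨p, hp⟩
    have e1 := Finset.orderEmbOfFin_unique (hcard T' hT' ⟨p, hp⟩)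
      (f := col T ⟨p, hp⟩) (fun x => by rw [← h1]; simp) (hmono T hT _)
    have e2 := Finset.orderEmbOfFin_unique (hcard T' hT' ⟨p, hp⟩)
      (f := col T' ⟨p, hp⟩) (fun x => by simp) (hmono T' hT' _)
    have e3 := congrFun (e1.trans e2.symm) ⟨j, (hcell j ⟨p, hp⟩).1 p.2⟩
    exact Fin.ext e3
  · intro S hS
    rw [mem_colFam] at hS
    obtain ⟨h1, h2, h3⟩ := hS
    have hSc : ∀ p, (S p).card = c p := by intro p; have := h2 p; omega
    let T : ∀ i : Fin k, Fin (r i) → Fin k := fun j p =>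
      have hp : (p : ℕ) < n := lt_of_lt_of_le p.2 (hrn j)
      ⟨(S ⟨p, hp⟩).orderEmbOfFin (hSc ⟨p, hp⟩) ⟨j, (hcell j ⟨p, hp⟩).1 p.2⟩,
        h1 _ _ (Finset.orderEmbOfFin_mem _ _ _)⟩
    have hcol : ∀ p x, col T p x = (S p).orderEmbOfFin (hSc p) x := fun p x => rfl
    have hcnt : ∀ p (x : Fin (c p)) t, x < (((S p).filter (· < t)).card) ↔
        (S p).orderEmbOfFin (hSc p) x < t := by
      intro p x t
      have : (S p).filter (· < t) = (Finset.univ.filter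
          (fun y => (S p).orderEmbOfFin (hSc p) y < t)).image ((S p).orderEmbOfFin (hSc p)) := by
        conv_lhs => rw [← Finset.image_orderEmbOfFin_univ (S p) (hSc p)]
        rw [Finset.filter_image]
      rw [this, Finset.card_image_of_injective _ ((S p).orderEmbOfFin (hSc p)).injective]
      constructor
      · intro h
        by_contra hcon
        have hsub : Finset.univ.filter (fun y => (S p).orderEmbOfFin (hSc p) y < t)
            ⊆ Finset.Iio x := by
          intro y hy
          simp only [Finset.mem_filter, Finset.mem_univ, true_and, Finset.mem_Iio] at hy ⊢
          by_contra hxy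
          have := ((S p).orderEmbOfFin (hSc p)).monotone (not_lt.1 hxy)
          omega
        have := Finset.card_le_card hsub
        rw [Fin.card_Iio] at this
        omega
      · intro h
        have hsub : Finset.Iic x ⊆
            Finset.univ.filter (fun y => (S p).orderEmbOfFin (hSc p) y < t) := by
          intro y hy
          simp only [Finset.mem_filter, Finset.mem_univ, true_and, Finset.mem_Iic] at hy ⊢
          have := ((S p).orderEmbOfFin (hSc p)).monotone hy
          omega
        have := Finset.card_le_card hsub
        rw [Fin.card_Iic] at this
        omega
    have hT : IsSsyt r T := by
      constructor
      · intro j p q hpq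
        have hp : (p : ℕ) < n := lt_of_lt_of_le p.2 (hrn j)
        have hq : (q : ℕ) < n := lt_of_lt_of_le q.2 (hrn j)
        have hjp := (hcell j ⟨p, hp⟩).1 p.2
        have hjq := (hcell j ⟨q, hq⟩).1 q.2
        have a := (hcnt ⟨q, hq⟩ ⟨j, hjq⟩
          ((S ⟨q, hq⟩).orderEmbOfFin (hSc ⟨q, hq⟩) ⟨j, hjq⟩ + 1)).2 (Nat.lt_succ_self _)
        have b := h3 ⟨p, hp⟩ ⟨q, hq⟩ hpq
          ((S ⟨q, hq⟩).orderEmbOfFin (hSc ⟨q, hq⟩) ⟨j, hjq⟩ + 1)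
        have e := (hcnt ⟨p, hp⟩ ⟨j, hjp⟩ _).1 (lt_of_lt_of_le a b)
        exact Nat.lt_succ_iff.1 e
      · intro j j' p q hj hpq
        obtain ⟨p, hp⟩ := p
        obtain ⟨q, hq⟩ := q
        obtain rfl : p = q := hpq
        exact ((S ⟨p, _⟩).orderEmbOfFin (hSc ⟨p, _⟩)).strictMono (by simpa using hj)
    refine ⟨T, by simpa [ssytFinset] using hT, ?_⟩
    funext p
    exact Finset.image_orderEmbOfFin_univ (S p) (hSc p)

/-- For a partition `λ` inside an `n × k` rectangle (`l i = λ_{i+1}`), the determinant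
`M(λ) = det[ C(k+i, j+λ_{n-j}) ]` equals the number of semistandard Young tableaux of
shape `λ̄'` (the conjugate of the complement, `λ̄'_j = #{i : λ_i ≤ k - j}`) with entries
in `{1,…,k}`, and also equals the product formula
`∏_m (k+m)! ∏_{i<j} (a_i - a_j) / ∏_i a_i! (k+n-1-a_i)!` with `a_i = λ_i + n - i`. -/
theorem stmt10 (n k : ℕ) (l : Fin n → ℕ)
    (hl : ∀ i j : Fin n, i ≤ j → l j ≤ l i) (hbd : ∀ i, l i ≤ k) :
    Matrix.det (Matrix.of fun i j : Fin n =>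
        (((k + (i : ℕ)).choose ((j : ℕ) + l j.rev)) : ℚ))
      = ((ssytFinset k (fun j : Fin k =>
          (Finset.univ.filter (fun i : Fin n => (l i : ℕ) < k - (j : ℕ))).card)).card : ℚ)
    ∧ Matrix.det (Matrix.of fun i j : Fin n =>
        (((k + (i : ℕ)).choose ((j : ℕ) + l j.rev)) : ℚ))
      = (∏ m ∈ Finset.range n, ((k + m).factorial : ℚ))
        * (∏ i : Fin n, ∏ j ∈ Finset.Ioi i,
            (((l i + (n - 1 - (i : ℕ))) : ℚ) - ((l j + (n - 1 - (j : ℕ))) : ℚ)))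
        / (∏ i : Fin n, ((l i + (n - 1 - (i : ℕ))).factorial : ℚ)
            * ((k + n - 1 - (l i + (n - 1 - (i : ℕ)))).factorial : ℚ)) := by
  refine ⟨?_, aux_prod n k l hbd⟩
  rw [ssyt_card n k _ (fun p : Fin n => k - l p.rev)]
  · rw [← det_colFam, ← Matrix.det_transpose]
    · congr 1
      ext p i
      have := hbd p.rev
      simp only [Matrix.transpose_apply, Matrix.of_apply, zbin]
      rw [if_neg (by omega)]
      congr 2
      omega
    · intro p q hpq
      have := hl q.rev p.rev (Fin.rev_le_rev.2 hpq)
      have := hbd p.rev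
      have := hbd q.rev
      simp only
      omega
  · intro p q hpq
    have := hl q.rev p.rev (Fin.rev_le_rev.2 hpq)
    simp only
    omega
  · intro j
    exact (Finset.card_le_univ _).trans (by simp)
  · intro p; simp
  · intro j p
    have hset : (j : ℕ) < k - l p.rev ↔ l p.rev < k - j := by omega
    rw [hset]
    constructor
    · intro h
      by_contra hcon
      have hsub : Finset.univ.filter (fun i : Fin n => l i < k - (j : ℕ)) ⊆ Finset.Ioi p.rev := by
        intro i hi
        simp only [Finset.mem_filter, Finset.mem_univ, true_and, Finset.mem_Ioi] at hi ⊢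
        by_contra hi'
        have := hl i p.rev (not_lt.1 hi')
        omega
      have := Finset.card_le_card hsub
      rw [Fin.card_Ioi, Fin.val_rev] at this
      omega
    · intro h
      have hsub : Finset.Ici p.rev ⊆ Finset.univ.filter (fun i : Fin n => l i < k - (j : ℕ)) := by
        intro i hi
        simp only [Finset.mem_filter, Finset.mem_univ, true_and, Finset.mem_Ici] at hi ⊢
        have := hl p.rev i hi
        omega
      have := Finset.card_le_card hsub
      rw [Fin.card_Ici, Fin.val_rev] at this
      omega
end
end

section
/- Let c > 1 and define ρ(x) on [-√c, √c] by ρ(x) = (1/2π)[arctan((-(c+1)x + 2c)/((c-1)√(c - x²))) + arctan(((c+1)x + 2c)/((c-1)√(c - x²)))] and ρ(x) = 0 for |x| > √c with |x| ≤ (c+1)/2. Then ∫_{-√c}^{√c} ρ(x) dx = 1. -/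
open Real

lemma aux_deriv (c : ℝ) (hc : 1 < c) (x : ℝ) (hx : 0 < c - x ^ 2) :
    HasDerivAt (fun x : ℝ => (x + (c + 1) / 2)
        * Real.arctan (((c + 1) * x + 2 * c) / ((c - 1) * Real.sqrt (c - x ^ 2)))
        - (c - 1) / 2 * Real.arcsin (x / Real.sqrt c))
      (Real.arctan (((c + 1) * x + 2 * c) / ((c - 1) * Real.sqrt (c - x ^ 2)))) x := by
  have hc0 : 0 < c := by linarith
  have hq : 0 < Real.sqrt c := Real.sqrt_pos.2 hc0
  have hq2 : Real.sqrt c ^ 2 = c := Real.sq_sqrt hc0.le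
  have hs : 0 < Real.sqrt (c - x ^ 2) := Real.sqrt_pos.2 hx
  have hs2 : Real.sqrt (c - x ^ 2) ^ 2 = c - x ^ 2 := Real.sq_sqrt hx.le
  have hc1 : 0 < c - 1 := by linarith
  have hlin : 0 < 2 * x + c + 1 := by nlinarith [sq_nonneg (x + 1)]
  have hsd : HasDerivAt (fun x : ℝ => Real.sqrt (c - x ^ 2)) (-x / Real.sqrt (c - x ^ 2)) x := by
    have h1 : HasDerivAt (fun x : ℝ => c - x ^ 2) (-(2 * x)) x := by
      simpa using ((hasDerivAt_id x).pow 2).const_sub c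
    convert h1.sqrt hx.ne' using 1
    field_simp
  have hnum : HasDerivAt (fun x : ℝ => (c + 1) * x + 2 * c) (c + 1) x := by
    simpa using ((hasDerivAt_id x).const_mul (c + 1)).add_const (2 * c)
  have hf : HasDerivAt (fun x : ℝ =>
      Real.arctan (((c + 1) * x + 2 * c) / ((c - 1) * Real.sqrt (c - x ^ 2))))
      ((c - 1) / (Real.sqrt (c - x ^ 2) * (2 * x + c + 1))) x := by
    have h := (hnum.div (hsd.const_mul (c - 1)) (by positivity)).arctan
    refine h.congr_deriv ?_
    have key : 1 + (((c + 1) * x + 2 * c) / ((c - 1) * Real.sqrt (c - x ^ 2))) ^ 2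
        = c * (2 * x + c + 1) ^ 2 / ((c - 1) ^ 2 * Real.sqrt (c - x ^ 2) ^ 2) := by
      rw [div_pow, mul_pow, hs2]
      field_simp
      ring
    have key2 : ((c + 1) * ((c - 1) * Real.sqrt (c - x ^ 2))
        - ((c + 1) * x + 2 * c) * ((c - 1) * (-x / Real.sqrt (c - x ^ 2))))
        = (c - 1) * c * (2 * x + c + 1) / Real.sqrt (c - x ^ 2) := by
      field_simp
      rw [hs2]
      ring
    simp only [Pi.div_apply]
    rw [key, key2]
    field_simp
  have hfrac : 1 - (x / Real.sqrt c) ^ 2 = (c - x ^ 2) / c := by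
    rw [div_pow, hq2]; field_simp
  have ha : HasDerivAt (fun x : ℝ => Real.arcsin (x / Real.sqrt c))
      (1 / Real.sqrt (c - x ^ 2)) x := by
    have hpos : 0 < 1 - (x / Real.sqrt c) ^ 2 := by rw [hfrac]; positivity
    have h := (Real.hasDerivAt_arcsin (x := x / Real.sqrt c)
      (by intro h; rw [h] at hpos; norm_num at hpos)
      (by intro h; rw [h] at hpos; norm_num at hpos)).comp x
      ((hasDerivAt_id x).div_const (Real.sqrt c))
    refine h.congr_deriv ?_
    rw [hfrac, Real.sqrt_div hx.le]
    field_simp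
  have := (((hasDerivAt_id x).add_const ((c + 1) / 2)).mul hf).sub (ha.const_mul ((c - 1) / 2))
  refine this.congr_deriv ?_
  have hk : (x + (c + 1) / 2) * ((c - 1) / (Real.sqrt (c - x ^ 2) * (2 * x + c + 1)))
      = (c - 1) / 2 * (1 / Real.sqrt (c - x ^ 2)) := by
    have hx2 : x + (c + 1) / 2 = (2 * x + c + 1) / 2 := by ring
    rw [hx2]
    field_simp
  simp only [id]
  rw [hk]
  ring

lemma aux_int (c : ℝ) (a b : ℝ) (n : ℝ) : IntervalIntegrable (fun x : ℝ =>
      Real.arctan ((n * x + 2 * c) / ((c - 1) * Real.sqrt (c - x ^ 2))))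
      MeasureTheory.volume a b := by
  have hb : IntervalIntegrable (fun _ : ℝ => Real.pi / 2) MeasureTheory.volume a b :=
    intervalIntegrable_const
  refine hb.mono_fun ?_ ?_
  · exact Measurable.aestronglyMeasurable (Real.measurable_arctan.comp (by fun_prop))
  · refine Filter.Eventually.of_forall fun x => ?_
    beta_reduce
    rw [Real.norm_eq_abs, Real.norm_eq_abs, abs_of_pos (by positivity : (0:ℝ) < Real.pi / 2)]
    exact abs_le.2 ⟨(Real.neg_pi_div_two_lt_arctan _).le, (Real.arctan_lt_pi_div_two _).le⟩

lemma aux_main (c : ℝ) (hc : 1 < c) :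
    ∫ x in (-Real.sqrt c)..(Real.sqrt c),
      Real.arctan (((c + 1) * x + 2 * c) / ((c - 1) * Real.sqrt (c - x ^ 2))) = Real.pi := by
  have hc0 : 0 < c := by linarith
  have hc1 : 0 < c - 1 := by linarith
  have hq : 0 < Real.sqrt c := Real.sqrt_pos.2 hc0
  have hq2 : Real.sqrt c ^ 2 = c := Real.sq_sqrt hc0.le
  have hq1 : 1 < Real.sqrt c := by
    rw [Real.lt_sqrt (by norm_num)]; linarith
  have hin : ∀ x ∈ Set.Ioo (-Real.sqrt c) (Real.sqrt c), 0 < c - x ^ 2 := by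
    intro x hx
    nlinarith [hx.1, hx.2, mul_pos (sub_pos.2 hx.2) (by linarith [hx.1] : 0 < Real.sqrt c + x)]
  have hden : ∀ p : ℝ, p ^ 2 = c → ∀ S : Set ℝ,
      (∀ᶠ x in nhdsWithin p S, x ∈ Set.Ioo (-Real.sqrt c) (Real.sqrt c)) →
      Filter.Tendsto (fun x : ℝ => ((c - 1) * Real.sqrt (c - x ^ 2))⁻¹) (nhdsWithin p S)
        Filter.atTop := by
    intro p hp S hS
    refine Filter.Tendsto.inv_tendsto_nhdsGT_zero (tendsto_nhdsWithin_iff.2 ⟨?_, ?_⟩)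
    · have h : Continuous (fun x : ℝ => (c - 1) * Real.sqrt (c - x ^ 2)) := by fun_prop
      have h2 := h.tendsto p
      rw [hp] at h2
      simp only [sub_self, Real.sqrt_zero, mul_zero] at h2
      exact h2.mono_left nhdsWithin_le_nhds
    · filter_upwards [hS] with x hx
      exact mul_pos hc1 (Real.sqrt_pos.2 (hin x hx))
  have hnum : Continuous (fun x : ℝ => (c + 1) * x + 2 * c) := by fun_prop
  have hlt : -Real.sqrt c < Real.sqrt c := by linarith
  have hA : Filter.Tendsto (fun x : ℝ =>
      Real.arctan (((c + 1) * x + 2 * c) / ((c - 1) * Real.sqrt (c - x ^ 2))))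
      (nhdsWithin (-Real.sqrt c) (Set.Ioi (-Real.sqrt c))) (nhds (-(Real.pi / 2))) := by
    refine (Real.tendsto_arctan_atBot.mono_right nhdsWithin_le_nhds).comp ?_
    simp only [div_eq_mul_inv]
    refine Filter.Tendsto.neg_mul_atTop (C := (c + 1) * (-Real.sqrt c) + 2 * c) ?_
      ((hnum.tendsto _).mono_left nhdsWithin_le_nhds)
      (hden _ (by rw [neg_sq, hq2]) _ (Ioo_mem_nhdsGT hlt))
    nlinarith [mul_pos hq (pow_pos (sub_pos.2 hq1) 2)]
  have hB : Filter.Tendsto (fun x : ℝ =>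
      Real.arctan (((c + 1) * x + 2 * c) / ((c - 1) * Real.sqrt (c - x ^ 2))))
      (nhdsWithin (Real.sqrt c) (Set.Iio (Real.sqrt c))) (nhds (Real.pi / 2)) := by
    refine (Real.tendsto_arctan_atTop.mono_right nhdsWithin_le_nhds).comp ?_
    simp only [div_eq_mul_inv]
    exact Filter.Tendsto.pos_mul_atTop (C := (c + 1) * (Real.sqrt c) + 2 * c) (by positivity)
      ((hnum.tendsto _).mono_left nhdsWithin_le_nhds)
      (hden _ hq2 _ (Ioo_mem_nhdsLT hlt))
  have hl : Continuous (fun x : ℝ => x + (c + 1) / 2) := by fun_prop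
  have hr : Continuous (fun x : ℝ => (c - 1) / 2 * Real.arcsin (x / Real.sqrt c)) :=
    continuous_const.mul (Real.continuous_arcsin.comp (by fun_prop))
  have := intervalIntegral.integral_eq_sub_of_hasDerivAt_of_tendsto hlt
    (fun x hx => aux_deriv c hc x (hin x hx)) (aux_int c _ _ (c + 1))
    ((((hl.tendsto _).mono_left nhdsWithin_le_nhds).mul hA).sub
      ((hr.tendsto _).mono_left nhdsWithin_le_nhds))
    ((((hl.tendsto _).mono_left nhdsWithin_le_nhds).mul hB).sub
      ((hr.tendsto _).mono_left nhdsWithin_le_nhds))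
  rw [this, neg_div, div_self hq.ne', Real.arcsin_neg, Real.arcsin_one]
  ring

/-- The limit density of the `(GL_n, GL_k)` skew Howe measure integrates to `1`:
for `c > 1`, with
`ρ(x) = (1/2π)(arctan((-(c+1)x+2c)/((c-1)√(c-x²))) + arctan(((c+1)x+2c)/((c-1)√(c-x²))))`,
one has `∫_{-√c}^{√c} ρ(x) dx = 1`. -/
theorem stmt18 (c : ℝ) (hc : 1 < c) :
    ∫ x in (-Real.sqrt c)..(Real.sqrt c),
      (1 / (2 * Real.pi))
        * (Real.arctan ((-(c + 1) * x + 2 * c) / ((c - 1) * Real.sqrt (c - x ^ 2)))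
          + Real.arctan (((c + 1) * x + 2 * c) / ((c - 1) * Real.sqrt (c - x ^ 2))))
      = 1 := by
  have h1 := aux_main c hc
  have h2 : ∫ x in (-Real.sqrt c)..(Real.sqrt c),
      Real.arctan ((-(c + 1) * x + 2 * c) / ((c - 1) * Real.sqrt (c - x ^ 2))) = Real.pi := by
    rw [← h1]
    have h := intervalIntegral.integral_comp_neg (a := -Real.sqrt c) (b := Real.sqrt c)
      (fun x => Real.arctan (((c + 1) * x + 2 * c) / ((c - 1) * Real.sqrt (c - x ^ 2))))
    rw [neg_neg] at h
    rw [← h]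
    congr 1
    funext x
    rw [neg_sq, mul_neg, neg_mul]
  rw [intervalIntegral.integral_const_mul,
    intervalIntegral.integral_add (aux_int c _ _ (-(c + 1))) (aux_int c _ _ (c + 1)), h1, h2]
  have := Real.pi_pos
  field_simp
  norm_num
end
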